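/- arXiv:1511.02737 — 5 statements merged into one kernel-verified Lean document; each statement's English description precedes it below -/
import Mathlib

section
/- Let Γ and H be groups with H finite, let p : Γ → H be a surjective group homomorphism, and let G denote the kernel of p. Then there exists an injective group homomorphism δ : Γ → G ≀ H such that the composite of δ with the canonical projection G ≀ H → H equals p. -/
/-- Right-translation automorphism of the base group `H → G` of the wreath product. -/
def wreathPerm {G H : Type*} [Group G] [Group H] (h : H) : (H → G) ≃* (H → G) where
  toFun f := fun k => f (k * h)
  invFun f := fun k => f (k * h⁻¹)
  left_inv f := by funext k; simp [mul_assoc]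
  right_inv f := by funext k; simp [mul_assoc]
  map_mul' f g := rfl

/-- The action of `H` on `H → G` by right translation: `(h • f) k = f (k * h)`. -/
def wreathAction (G H : Type*) [Group G] [Group H] : H →* MulAut (H → G) where
  toFun := wreathPerm
  map_one' := by ext f k; simp [wreathPerm]
  map_mul' a b := by ext f k; simp [wreathPerm, mul_assoc]

/-- The wreath product `G ≀ H`, i.e. the semidirect product `(H → G) ⋊ H`. -/
abbrev Wreath (G H : Type*) [Group G] [Group H] := (H → G) ⋊[wreathAction G H] H

/-!
Choose `s : H → Γ` such that `p ∘ s` commutes with right translation by `p.range`; to find one, lift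
along `p` the quotient of each `k` by a fixed representative of its coset. For `x : Γ` and `k : H`,
the elements `s k * x` and `s (k * p x)` have the same image under `p`, so they differ by an element
of the kernel. Recording this element as a function of `k`, together with `p x`, gives the embedding
of Kaloujnine and Krasner: the product rule telescopes, and `x` is recovered from `p x` and the
value at `k = 1`.
-/

section KernelEmbedding

variable {Γ H : Type*} [Group Γ] [Group H] {p : Γ →* H} {s : H → Γ}

/-- `s : H → Γ` is an equivariant lift along `p` if `p ∘ s` commutes with right translation by the
range of `p`. Sections of `p` are the case `p ∘ s = id`. -/
def IsEquivariantLift (p : Γ →* H) (s : H → Γ) : Prop :=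
  ∀ k x, p (s (k * p x)) = p (s k) * p x

theorem exists_isEquivariantLift (p : Γ →* H) : ∃ s : H → Γ, IsEquivariantLift p s := by
  let rep (k : H) : H := (k : H ⧸ p.range).out
  have rep_mul (k : H) (x : Γ) : rep (k * p x) = rep k :=
    congrArg Quotient.out (QuotientGroup.mk_mul_of_mem k ⟨x, rfl⟩)
  have exists_lift (k : H) : ∃ γ, p γ = (rep k)⁻¹ * k :=
    QuotientGroup.eq.mp (QuotientGroup.out_eq' (k : H ⧸ p.range))
  choose s hs using exists_lift
  exact ⟨s, fun k x => by rw [hs, hs, rep_mul, mul_assoc]⟩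

namespace IsEquivariantLift

/-- The kernel-valued crossed homomorphism attached to an equivariant lift `s`: its value at `x` is
the base-group component of the image of `x` in the wreath product. -/
def kernelCocycle (hs : IsEquivariantLift p s) (x : Γ) : H → p.ker := fun k =>
  ⟨s k * x * (s (k * p x))⁻¹, by simp [MonoidHom.mem_ker, hs k x]⟩

theorem kernelCocycle_mul (hs : IsEquivariantLift p s) (x y : Γ) :
    hs.kernelCocycle (x * y) =
      hs.kernelCocycle x * wreathAction p.ker H (p x) (hs.kernelCocycle y) := by
  funext k
  apply Subtype.ext
  calc s k * (x * y) * (s (k * p (x * y)))⁻¹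
      = s k * (x * y) * (s (k * p x * p y))⁻¹ := by rw [map_mul, mul_assoc k]
    _ = (s k * x * (s (k * p x))⁻¹) * (s (k * p x) * y * (s (k * p x * p y))⁻¹) := by group

/-- The Kaloujnine–Krasner homomorphism into the wreath product, with components the cocycle of an
equivariant lift and `p` itself. -/
def toWreath (hs : IsEquivariantLift p s) : Γ →* Wreath p.ker H :=
  MonoidHom.mk' (fun x => ⟨hs.kernelCocycle x, p x⟩) fun x y =>
    SemidirectProduct.ext (hs.kernelCocycle_mul x y) (map_mul p x y)

theorem rightHom_comp_toWreath (hs : IsEquivariantLift p s) :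
    SemidirectProduct.rightHom.comp hs.toWreath = p :=
  rfl

theorem toWreath_injective (hs : IsEquivariantLift p s) : Function.Injective hs.toWreath := by
  intro x y hxy
  have map_eq : p x = p y := congrArg SemidirectProduct.right hxy
  have cocycle_eq : hs.kernelCocycle x = hs.kernelCocycle y :=
    congrArg SemidirectProduct.left hxy
  have value_eq : s 1 * x * (s (1 * p x))⁻¹ = s 1 * y * (s (1 * p y))⁻¹ :=
    congrArg Subtype.val (congrFun cocycle_eq 1)
  rw [map_eq] at value_eq
  exact mul_left_cancel (mul_right_cancel value_eq)

end IsEquivariantLift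

theorem exists_embedding_into_wreath_of_kernel_general (p : Γ →* H) :
    ∃ δ : Γ →* Wreath p.ker H,
      Function.Injective δ ∧ SemidirectProduct.rightHom.comp δ = p := by
  obtain ⟨s, hs⟩ := exists_isEquivariantLift p
  exact ⟨hs.toWreath, hs.toWreath_injective, hs.rightHom_comp_toWreath⟩

end KernelEmbedding

/-- For a surjective homomorphism `p : Γ → H` with `H` finite and kernel `G`,
there is an injective homomorphism `δ : Γ → G ≀ H` such that the canonical projection
`G ≀ H → H` composed with `δ` equals `p`. -/
theorem exists_embedding_into_wreath_of_kernel
    {Γ H : Type*} [Group Γ] [Group H] [Finite H]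
    (p : Γ →* H) (hp : Function.Surjective p) :
    ∃ δ : Γ →* Wreath p.ker H,
      Function.Injective δ ∧ SemidirectProduct.rightHom.comp δ = p := by
  exact exists_embedding_into_wreath_of_kernel_general p
end

section
/- Let A be a group and let H and S be finite groups. Then there exists an injective group homomorphism from (H → A) ≀ S into A ≀ (H × S), where H → A denotes the group of functions from H to A under pointwise multiplication. -/
/-!
An element of `(S → H → A) ⋊ S` is a doubly indexed family together with a translation of its outer
index. Uncurrying turns the family into a function on `H × S`, and the translation by `s` on `S`
into the translation by `(1, s)`, so uncurrying and `s ↦ (1, s)` together form a homomorphism of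
semidirect products. Both are injective, hence so is the map they induce.
-/

theorem semidirectProduct_map_injective {N₁ G₁ N₂ G₂ : Type*} [Group N₁] [Group G₁] [Group N₂]
    [Group G₂] {φ₁ : G₁ →* MulAut N₁} {φ₂ : G₂ →* MulAut N₂} {fn : N₁ →* N₂} {fg : G₁ →* G₂}
    (h : ∀ g, fn.comp (φ₁ g).toMonoidHom = (φ₂ (fg g)).toMonoidHom.comp fn)
    (hfn : Function.Injective fn) (hfg : Function.Injective fg) :
    Function.Injective (SemidirectProduct.map fn fg h) := fun _ _ hxy =>
  SemidirectProduct.ext (hfn (congrArg SemidirectProduct.left hxy))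
    (hfg (congrArg SemidirectProduct.right hxy))

/-- Uncurrying as a multiplicative equivalence. The two arguments are swapped because the index
group `S` of the outer wreath product is the second factor of `H × S`. -/
def uncurrySwapMulEquiv (A H S : Type*) [Mul A] : (S → H → A) ≃* (H × S → A) where
  toFun f p := f p.2 p.1
  invFun f s h := f (h, s)
  left_inv _ := rfl
  right_inv _ := rfl
  map_mul' _ _ := rfl

section

variable (A H S : Type*) [Group A] [Group H] [Group S]

theorem uncurrySwapMulEquiv_wreathAction (s : S) (f : S → H → A) :
    uncurrySwapMulEquiv A H S (wreathAction (H → A) S s f) =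
      wreathAction A (H × S) (1, s) (uncurrySwapMulEquiv A H S f) := by
  ext ⟨h, t⟩
  change f (t * s) h = f (t * s) (h * 1)
  rw [mul_one]

/-- The homomorphism `(H → A) ≀ S →* A ≀ (H × S)` that uncurries the base group and includes `S`
as the second factor of `H × S`. -/
def wreathUncurry : Wreath (H → A) S →* Wreath A (H × S) :=
  SemidirectProduct.map (uncurrySwapMulEquiv A H S).toMonoidHom (MonoidHom.inr H S)
    fun s => MonoidHom.ext (uncurrySwapMulEquiv_wreathAction A H S s)

theorem wreathUncurry_injective : Function.Injective (wreathUncurry A H S) :=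
  semidirectProduct_map_injective _ (uncurrySwapMulEquiv A H S).injective
    (Prod.mk_right_injective 1)

end

theorem wreath_pi_embeds_wreath_prod_general
    (A H S : Type*) [Group A] [Group H] [Group S] :
    ∃ j : Wreath (H → A) S →* Wreath A (H × S), Function.Injective j :=
  ⟨wreathUncurry A H S, wreathUncurry_injective A H S⟩

/-- For a group `A` and finite groups `H` and `S`, the wreath product
`(H → A) ≀ S` embeds into `A ≀ (H × S)`. -/
theorem wreath_pi_embeds_wreath_prod
    (A : Type*) [Group A] (H S : Type*) [Group H] [Group S] [Finite H] [Finite S] :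
    ∃ j : Wreath (H → A) S →* Wreath A (H × S), Function.Injective j :=
  wreath_pi_embeds_wreath_prod_general A H S
end

section
/- Let P be a finite subset of ℂ, let n be a natural number, and let X be the space {f : Fin n → ℂ | f is injective and f(i) ∉ P for all i}, topologized as a subspace of the product space Fin n → ℂ. Then X is aspherical: for every natural number k ≥ 2 and every basepoint x ∈ X, the homotopy group π_k(X, x) is trivial. -/
open Set Metric Function Topology ComplexConjugate unitInterval
open Complex (UnitDisc)
open scoped Complex.UnitDisc

/-!
Forgetting the last point is a fibration between configuration spaces (Fadell–Neuwirth): when the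
first points move a little, the last one is dragged along by a small perturbation of the identity,
and this produces lifts of homotopies that stand still wherever the homotopy does. The fibres are
open subsets of `ℂ`, so by induction it is enough to show that a map from a cube to an open set
`U ⊆ ℂ` that is constant on the boundary is null-homotopic relative to the boundary.

This is proved without universal covers, by the square-root trick from Koebe's proof of the
uniformization theorem for planar domains. After rescaling, `f` maps the cube to an open subset `U`
of the unit disc and the boundary to `0`. As long as some point near the centre of the disc is
missing from `U`, the map `f` lifts through a degree-two self-map of the disc that fixes `0` and is
branched over the missing point, because the cube is simply connected; and a null-homotopy of the
lift pushes down to one of `f`. The modulus of each value grows by a definite factor under each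
such lift. On the other hand all the lifts are, on patches of fixed size, holomorphic functions of
the original map, so by the Schwarz–Pick lemma and a chain-of-discs argument their squared moduli
stay below a constant `r < 1`. Hence, unless `f` is identically `0`, after finitely many lifts the
disc `‖z‖ ^ 2 ≤ r` lies in the target and the lift is contracted to `0` along radii.
-/

/-! ### Null-homotopies relative to a subset -/

section Aspherical

variable {K X Y Z : Type*} [TopologicalSpace K] [TopologicalSpace X] [TopologicalSpace Y]
  [TopologicalSpace Z] {A : Set K}

/-- `f` is homotopic to a constant map by a homotopy that is stationary on `A`. -/
def NullhomotopicRel (A : Set K) (f : C(K, X)) : Prop :=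
  ∃ x, f.HomotopicRel (.const K x) A

lemma NullhomotopicRel.postcomp {f : C(K, X)} (hf : NullhomotopicRel A f) (g : C(X, Y)) :
    NullhomotopicRel A (g.comp f) :=
  let ⟨x, hx⟩ := hf
  ⟨g x, hx.comp_continuousMap g⟩

/-- Every map from `K` to `X` that is constant on `A` is null-homotopic relative to `A`. For the
pair formed by a cube and its boundary this says that the homotopy groups of `X` in the dimension
of the cube vanish, at every base point. -/
def IsAsphericalRel (A : Set K) (X : Type*) [TopologicalSpace X] : Prop :=
  ∀ f : C(K, X), (f '' A).Subsingleton → NullhomotopicRel A f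

lemma isAsphericalRel_of_subsingleton [Nonempty K] [Subsingleton X] : IsAsphericalRel A X := by
  intro f _
  obtain ⟨y⟩ := ‹Nonempty K›
  exact ⟨f y, Subsingleton.elim f (.const K (f y)) ▸ .refl f⟩

lemma IsAsphericalRel.of_leftInverse (hX : IsAsphericalRel A X) {i : C(Y, X)} {r : C(X, Y)}
    (hri : Function.LeftInverse r i) : IsAsphericalRel A Y := by
  intro f hf
  have hnull := (hX (i.comp f) (by
    rw [ContinuousMap.coe_comp, Set.image_comp]
    exact hf.image i)).postcomp r
  rwa [← ContinuousMap.comp_assoc, show r.comp i = .id Y from ContinuousMap.ext hri,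
    ContinuousMap.id_comp] at hnull

/-- The homotopy lifting property of `p` for `K`, by lifts that stand still at every point of `K`
at which the given homotopy stands still. -/
def HasRegularLifting (K : Type*) [TopologicalSpace K] (p : C(X, Y)) : Prop :=
  ∀ (H : C(I × K, Y)) (g : C(K, X)), (∀ y, H (0, y) = p (g y)) →
    ∃ G : C(I × K, X), (∀ z, p (G z) = H z) ∧ (∀ y, G (0, y) = g y) ∧
      ∀ y, (∀ t, H (t, y) = H (0, y)) → ∀ t, G (t, y) = g y

lemma HasRegularLifting.exists_homotopicRel {p : C(X, Y)} (hp : HasRegularLifting K p)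
    {f : C(K, X)} {h : C(K, Y)} (H : (p.comp f).HomotopicRel h A) :
    ∃ f' : C(K, X), p.comp f' = h ∧ f.HomotopicRel f' A := by
  obtain ⟨H⟩ := H
  obtain ⟨G, hpG, hG₀, hG⟩ := hp H.toContinuousMap f (by simp)
  refine ⟨G.comp (.prodMk (.const K 1) (.id K)), ?_, ⟨⟨G, hG₀, fun y ↦ rfl⟩, ?_⟩⟩
  · ext y
    simp [hpG]
  · intro t y hy
    exact hG y (fun s ↦ by simpa using H.prop s y hy) t

theorem IsAsphericalRel.of_fibration {p : C(X, Y)} (hp : HasRegularLifting K p)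
    (hY : IsAsphericalRel A Y) (hfib : ∀ b, IsAsphericalRel A (p ⁻¹' {b})) :
    IsAsphericalRel A X := by
  intro f hf
  obtain ⟨b, hb⟩ := hY (p.comp f) (by
    rw [ContinuousMap.coe_comp, Set.image_comp]
    exact hf.image p)
  obtain ⟨f', hpf', hff'⟩ := hp.exists_homotopicRel hb
  let f'' : C(K, p ⁻¹' {b}) := ⟨fun y ↦ ⟨f' y, DFunLike.congr_fun hpf' y⟩, by fun_prop⟩
  have hf'' : (f'' '' A).Subsingleton := by
    have hf' : (f' '' A).Subsingleton := by
      rwa [← image_congr fun y hy ↦ hff'.some.fst_eq_snd hy]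
    rintro _ ⟨y, hy, rfl⟩ _ ⟨z, hz, rfl⟩
    exact Subtype.ext (hf' (mem_image_of_mem _ hy) (mem_image_of_mem _ hz))
  obtain ⟨e, he⟩ := (hfib b f'' hf'').postcomp ⟨Subtype.val, continuous_subtype_val⟩
  exact ⟨e, hff'.trans he⟩

end Aspherical

/-! ### Automorphisms of the unit disc -/

section Moebius

lemma one_sub_conj_mul_ne_zero (a z : 𝔻) : 1 - conj (a : ℂ) * z ≠ 0 :=
  sub_ne_zero.2 (star a * z).coe_ne_one.symm

lemma sq_norm_one_sub_conj_mul_sub_sq_norm_sub (a z : ℂ) :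
    ‖1 - conj a * z‖ ^ 2 - ‖z - a‖ ^ 2 = (1 - ‖a‖ ^ 2) * (1 - ‖z‖ ^ 2) := by
  simp only [Complex.sq_norm, Complex.normSq_apply, Complex.sub_re, Complex.sub_im, Complex.one_re,
    Complex.one_im, Complex.mul_re, Complex.mul_im, Complex.conj_re, Complex.conj_im]
  ring

lemma one_sub_sq_norm_div (a z : 𝔻) :
    1 - ‖((z : ℂ) - a) / (1 - conj (a : ℂ) * z)‖ ^ 2 =
      (1 - ‖(a : ℂ)‖ ^ 2) * (1 - ‖(z : ℂ)‖ ^ 2) / ‖1 - conj (a : ℂ) * z‖ ^ 2 := by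
  have hden : ‖1 - conj (a : ℂ) * z‖ ≠ 0 := norm_ne_zero_iff.2 (one_sub_conj_mul_ne_zero a z)
  rw [← sq_norm_one_sub_conj_mul_sub_sq_norm_sub, norm_div, div_pow, sub_div,
    div_self (pow_ne_zero 2 hden)]

/-- The automorphism `z ↦ (z - a) / (1 - ā z)` of the unit disc. The number `‖moebius a z‖` is the
pseudo-hyperbolic distance from `a` to `z`. -/
noncomputable def moebius (a z : 𝔻) : 𝔻 :=
  .mk ((z - a) / (1 - conj (a : ℂ) * z)) <| by
    have h : 0 < (1 - ‖(a : ℂ)‖ ^ 2) * (1 - ‖(z : ℂ)‖ ^ 2) / ‖1 - conj (a : ℂ) * z‖ ^ 2 :=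
      div_pos (mul_pos (sub_pos.2 a.sq_norm_lt_one) (sub_pos.2 z.sq_norm_lt_one))
        (pow_pos (norm_pos_iff.2 (one_sub_conj_mul_ne_zero a z)) 2)
    rw [← one_sub_sq_norm_div, sub_pos, sq_lt_one_iff₀ (norm_nonneg _)] at h
    exact h

lemma coe_moebius (a z : 𝔻) : (moebius a z : ℂ) = (z - a) / (1 - conj (a : ℂ) * z) := rfl

lemma one_sub_sq_norm_moebius (a z : 𝔻) :
    1 - ‖(moebius a z : ℂ)‖ ^ 2 =
      (1 - ‖(a : ℂ)‖ ^ 2) * (1 - ‖(z : ℂ)‖ ^ 2) / ‖1 - conj (a : ℂ) * z‖ ^ 2 :=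
  one_sub_sq_norm_div a z

lemma one_sub_sq_norm_mul_div_four_le (a z : 𝔻) :
    (1 - ‖(a : ℂ)‖ ^ 2) * (1 - ‖(z : ℂ)‖ ^ 2) / 4 ≤ 1 - ‖(moebius a z : ℂ)‖ ^ 2 := by
  have hden : ‖1 - conj (a : ℂ) * z‖ ≤ 2 := calc
    ‖1 - conj (a : ℂ) * z‖ ≤ ‖(1 : ℂ)‖ + ‖conj (a : ℂ) * z‖ := norm_sub_le _ _
    _ ≤ 1 + 1 := add_le_add norm_one.le (star a * z).norm_lt_one.le
    _ = 2 := one_add_one_eq_two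
  rw [one_sub_sq_norm_moebius]
  refine div_le_div_of_nonneg_left ?_ ?_ ?_
  · exact mul_nonneg (sub_nonneg.2 a.sq_norm_lt_one.le) (sub_nonneg.2 z.sq_norm_lt_one.le)
  · exact pow_pos (norm_pos_iff.2 (one_sub_conj_mul_ne_zero a z)) 2
  · nlinarith [norm_nonneg (1 - conj (a : ℂ) * z)]

lemma norm_moebius_comm (a z : 𝔻) : ‖(moebius a z : ℂ)‖ = ‖(moebius z a : ℂ)‖ := by
  have hden : conj (1 - conj (a : ℂ) * z) = 1 - conj (z : ℂ) * a := by
    rw [map_sub, map_one, map_mul, Complex.conj_conj, mul_comm]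
  rw [coe_moebius, coe_moebius, norm_div, norm_div, norm_sub_rev, ← hden, RCLike.norm_conj]

lemma moebius_self (a : 𝔻) : moebius a a = 0 := by
  rw [← UnitDisc.coe_inj, coe_moebius, sub_self, zero_div, UnitDisc.coe_zero]

lemma moebius_zero_right (a : 𝔻) : moebius a 0 = -a := by
  rw [← UnitDisc.coe_inj]
  simp [coe_moebius]

lemma moebius_neg_moebius (a z : 𝔻) : moebius (-a) (moebius a z) = z := by
  have hz := one_sub_conj_mul_ne_zero a z
  have hdiv {d : ℂ} (hd : d ≠ 0) :
      ((z - a) / d + a) / (1 + conj (a : ℂ) * ((z - a) / d)) =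
        (z - a + a * d) / (d + conj (a : ℂ) * (z - a)) := by
    field_simp
  have hsum : 1 - conj (a : ℂ) * z + conj (a : ℂ) * (z - a) = 1 - conj (a : ℂ) * a := by ring
  have ha := one_sub_conj_mul_ne_zero a a
  rw [← UnitDisc.coe_inj, coe_moebius, coe_moebius, UnitDisc.coe_neg, map_neg, sub_neg_eq_add,
    neg_mul, sub_neg_eq_add, hdiv hz, hsum, div_eq_iff ha]
  ring

lemma moebius_moebius_neg (a z : 𝔻) : moebius a (moebius (-a) z) = z := by
  simpa using moebius_neg_moebius (-a) z

lemma moebius_injective (a : 𝔻) : Injective (moebius a) :=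
  LeftInverse.injective (moebius_neg_moebius a)

lemma continuous_moebius (a : 𝔻) : Continuous (moebius a) := by
  refine UnitDisc.isEmbedding_coe.continuous_iff.2
    (Continuous.div ?_ ?_ (one_sub_conj_mul_ne_zero a))
  · exact UnitDisc.continuous_coe.sub continuous_const
  · exact continuous_const.sub (continuous_const.mul UnitDisc.continuous_coe)

lemma differentiableOn_moebius_comp {g : ℂ → 𝔻} {s : Set ℂ}
    (hg : DifferentiableOn ℂ (fun z ↦ (g z : ℂ)) s) (a : 𝔻) :
    DifferentiableOn ℂ (fun z ↦ (moebius a (g z) : ℂ)) s :=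
  (hg.sub_const _).fun_div ((hg.const_mul _).const_sub _) fun z _ ↦ one_sub_conj_mul_ne_zero a (g z)

lemma norm_moebius_le_of_differentiableOn {g : ℂ → 𝔻} {c z : ℂ} {ρ : ℝ}
    (hg : DifferentiableOn ℂ (fun u ↦ (g u : ℂ)) (ball c ρ)) (hz : z ∈ ball c ρ) :
    ‖(moebius (g c) (g z) : ℂ)‖ ≤ dist z c / ρ := by
  have hmaps : MapsTo (fun u ↦ (moebius (g c) (g u) : ℂ)) (ball c ρ)
      (closedBall (moebius (g c) (g c)) 1) := fun u _ ↦ by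
    simpa [moebius_self] using (moebius (g c) (g u)).norm_lt_one.le
  have h := Complex.dist_le_div_mul_dist_of_mapsTo_ball (differentiableOn_moebius_comp hg _)
    hmaps hz
  rwa [moebius_self, UnitDisc.coe_zero, dist_zero_right, one_div_mul_eq_div] at h

lemma one_sub_sq_norm_le_of_norm_moebius_le_half {a b : 𝔻} (h : ‖(moebius a b : ℂ)‖ ≤ 1 / 2) :
    3 / 16 * (1 - ‖(a : ℂ)‖ ^ 2) ≤ 1 - ‖(b : ℂ)‖ ^ 2 := by
  have ha : 0 < 1 - ‖(a : ℂ)‖ ^ 2 := sub_pos.2 a.sq_norm_lt_one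
  have hden : (1 - ‖(a : ℂ)‖ ^ 2) / 2 ≤ ‖1 - conj (a : ℂ) * b‖ := by
    have := norm_sub_norm_le 1 (conj (a : ℂ) * b)
    rw [norm_one, norm_mul, RCLike.norm_conj] at this
    nlinarith [a.norm_lt_one, b.norm_lt_one, norm_nonneg (a : ℂ), norm_nonneg (b : ℂ)]
  have hprod : 3 / 4 * ‖1 - conj (a : ℂ) * b‖ ^ 2 ≤ (1 - ‖(a : ℂ)‖ ^ 2) * (1 - ‖(b : ℂ)‖ ^ 2) := by
    rw [← le_div_iff₀ (pow_pos (norm_pos_iff.2 (one_sub_conj_mul_ne_zero a b)) 2),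
      ← one_sub_sq_norm_moebius]
    nlinarith [norm_nonneg (moebius a b : ℂ)]
  nlinarith [pow_le_pow_left₀ (by positivity) hden 2]

end Moebius

/-! ### The Koebe map -/

section Koebe

/-- The self-map of the unit disc that becomes squaring after moving `0` to `-s` in the source and
to `s²` in the target. It fixes `0` and is a two-fold covering away from its critical
value `-s²`. -/
noncomputable def koebe (s w : 𝔻) : 𝔻 :=
  moebius (s ^ (2 : ℕ+)) (moebius s w ^ (2 : ℕ+))

lemma continuous_koebe (s : 𝔻) : Continuous (koebe s) :=
  (continuous_moebius _).comp ((UnitDisc.continuous_pow 2).comp (continuous_moebius s))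

lemma koebe_zero (s : 𝔻) : koebe s 0 = 0 := by
  have : (-s) ^ (2 : ℕ+) = s ^ (2 : ℕ+) := by
    rw [← UnitDisc.coe_inj]
    simp
  rw [koebe, moebius_zero_right, this, moebius_self]

/-- Like every Blaschke product of degree two, `koebe s` is determined by its two zeros. -/
lemma koebe_eq_mul_moebius (s w : 𝔻) : koebe s w = w * moebius (moebius (-s) s) w := by
  have hw := mul_comm (conj (s : ℂ)) w ▸ one_sub_conj_mul_ne_zero s w
  have hs := one_sub_conj_mul_ne_zero (-s) s
  have h₁ := one_sub_conj_mul_ne_zero (s ^ (2 : ℕ+)) (moebius s w ^ (2 : ℕ+))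
  have h₂ := one_sub_conj_mul_ne_zero (moebius (-s) s) w
  rw [← UnitDisc.coe_inj]
  simp only [koebe, coe_moebius, UnitDisc.coe_pow, UnitDisc.coe_neg, UnitDisc.coe_mul, map_neg,
    map_pow, map_div₀, map_add, map_mul, map_one, Complex.conj_conj, sub_neg_eq_add, neg_mul,
    PNat.val_ofNat] at *
  rw [mul_comm] at hs
  rw [← mul_div_assoc, div_eq_div_iff h₁ h₂]
  field_simp
  ring

lemma sq_norm_koebe_le {s w : 𝔻} {r : ℝ} (hs : ‖((s ^ (2 : ℕ+) : 𝔻) : ℂ)‖ ^ 2 ≤ r)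
    (hw : ‖(w : ℂ)‖ ^ 2 ≤ r) (hr : r ≤ 1) :
    ‖(koebe s w : ℂ)‖ ^ 2 ≤ (1 - (1 - r) ^ 3 / 64) * ‖(w : ℂ)‖ ^ 2 := by
  have hs' : (1 - r) / 2 ≤ 1 - ‖(s : ℂ)‖ ^ 2 := by
    rw [UnitDisc.coe_pow, PNat.val_ofNat, norm_pow] at hs
    nlinarith [s.sq_norm_lt_one]
  have hb : (1 - r) ^ 2 / 16 ≤ 1 - ‖(moebius (-s) s : ℂ)‖ ^ 2 := by
    have := one_sub_sq_norm_mul_div_four_le (-s) s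
    rw [UnitDisc.coe_neg, norm_neg] at this
    nlinarith
  have hφ : (1 - r) ^ 3 / 64 ≤ 1 - ‖(moebius (moebius (-s) s) w : ℂ)‖ ^ 2 := calc
    (1 - r) ^ 3 / 64 = (1 - r) ^ 2 / 16 * (1 - r) / 4 := by ring
    _ ≤ (1 - ‖(moebius (-s) s : ℂ)‖ ^ 2) * (1 - ‖(w : ℂ)‖ ^ 2) / 4 := by
      gcongr
      exact sub_nonneg.2 (UnitDisc.sq_norm_lt_one _).le
    _ ≤ 1 - ‖(moebius (moebius (-s) s) w : ℂ)‖ ^ 2 := one_sub_sq_norm_mul_div_four_le _ _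
  rw [koebe_eq_mul_moebius, UnitDisc.coe_mul, norm_mul, mul_pow, mul_comm]
  gcongr
  linarith

end Koebe

section KoebeLift

/-- The non-trivial deck transformation of the branched covering `koebe s`. -/
noncomputable def deck (s w : 𝔻) : 𝔻 :=
  moebius (-s) (-moebius s w)

lemma continuous_deck (s : 𝔻) : Continuous (deck s) :=
  (continuous_moebius _).comp (UnitDisc.isEmbedding_coe.continuous_iff.2
    (UnitDisc.continuous_coe.comp (continuous_moebius s)).neg)

lemma deck_deck (s w : 𝔻) : deck s (deck s w) = w := by
  rw [deck, deck, moebius_moebius_neg, neg_neg, moebius_neg_moebius]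

lemma koebe_deck (s w : 𝔻) : koebe s (deck s w) = koebe s w := by
  rw [koebe, koebe, deck, moebius_moebius_neg]
  congr 1
  rw [← UnitDisc.coe_inj]
  simp

lemma coe_moebius_ne_zero {s w : 𝔻} (h : koebe s w ≠ -s ^ (2 : ℕ+)) : (moebius s w : ℂ) ≠ 0 := by
  intro h0
  refine h ?_
  have : (0 : 𝔻) ^ (2 : ℕ+) = 0 := UnitDisc.pow_eq_zero.2 rfl
  rw [koebe, UnitDisc.coe_eq_zero.1 h0, this, moebius_zero_right]

variable {X : Type*} [TopologicalSpace X] {U : Set X}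

lemma exists_continuousOn_koebe_eq [LocallyPathConnectedSpace X] (hU : IsSimplyConnected U)
    (hUo : IsOpen U) {g : X → 𝔻} (hg : ContinuousOn g U) {s : 𝔻}
    (hs : ∀ x ∈ U, g x ≠ -s ^ (2 : ℕ+)) :
    ∃ g' : X → 𝔻, ContinuousOn g' U ∧ ∀ x, koebe s (g' x) = g x := by
  obtain ⟨h, hh, hsq⟩ := UnitDisc.exists_continuousOn_pow_eq hU hUo
    ((continuous_moebius (-s ^ (2 : ℕ+))).comp_continuousOn hg) (by
      rintro ⟨x, hx, h⟩
      rw [comp_apply, ← moebius_self (-s ^ (2 : ℕ+))] at h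
      exact hs x hx (moebius_injective _ h)) 2
  refine ⟨fun x ↦ moebius (-s) (h x), (continuous_moebius _).comp_continuousOn hh, fun x ↦ ?_⟩
  rw [koebe, moebius_moebius_neg, hsq, comp_apply, moebius_moebius_neg]

lemma eqOn_or_eqOn_deck_of_koebe_eq (hU : IsPreconnected U) {g₁ g₂ : X → 𝔻} {s : 𝔻}
    (hg₁ : ContinuousOn g₁ U) (hg₂ : ContinuousOn g₂ U)
    (h : ∀ x ∈ U, koebe s (g₁ x) = koebe s (g₂ x)) (hs : ∀ x ∈ U, koebe s (g₂ x) ≠ -s ^ (2 : ℕ+)) :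
    EqOn g₁ g₂ U ∨ EqOn g₁ (deck s ∘ g₂) U := by
  have hcont {g : X → 𝔻} (hg : ContinuousOn g U) : ContinuousOn (fun x ↦ (moebius s (g x) : ℂ)) U :=
    (UnitDisc.continuous_coe.comp (continuous_moebius s)).comp_continuousOn hg
  rcases hU.eq_or_eq_neg_of_sq_eq (hcont hg₁) (hcont hg₂)
    (fun x hx ↦ congrArg UnitDisc.coe (moebius_injective _ (h x hx)))
    (fun {x} hx ↦ coe_moebius_ne_zero (hs x hx)) with heq | heq
  · exact .inl fun x hx ↦ moebius_injective s (UnitDisc.coe_injective (heq hx))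
  · refine .inr fun x hx ↦ moebius_injective s (UnitDisc.coe_injective ?_)
    rw [comp_apply, deck, moebius_moebius_neg]
    exact heq hx

lemma differentiableAt_of_comp {F h : ℂ → ℂ} {F' z : ℂ} (hF : HasStrictDerivAt F F' (h z))
    (hF' : F' ≠ 0) (hh : ContinuousAt h z) (hFh : DifferentiableAt ℂ (F ∘ h) z) :
    DifferentiableAt ℂ h z := by
  refine ((hF.to_localInverse hF').hasDerivAt.differentiableAt.comp z hFh).congr_of_eventuallyEq ?_
  filter_upwards [hh.eventually (hF.eventually_left_inverse hF')] with u hu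
  exact hu.symm

lemma differentiableOn_of_koebe_comp {U : Set ℂ} (hU : IsOpen U) {g : ℂ → 𝔻} {s : 𝔻}
    (hg : ContinuousOn g U) (hd : DifferentiableOn ℂ (fun z ↦ (koebe s (g z) : ℂ)) U)
    (hs : ∀ z ∈ U, koebe s (g z) ≠ -s ^ (2 : ℕ+)) :
    DifferentiableOn ℂ (fun z ↦ (g z : ℂ)) U := by
  suffices hroot : DifferentiableOn ℂ (fun z ↦ (moebius s (g z) : ℂ)) U by
    simpa only [moebius_neg_moebius] using differentiableOn_moebius_comp hroot (-s)
  have hsq := differentiableOn_moebius_comp hd (-s ^ (2 : ℕ+))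
  simp only [koebe, moebius_neg_moebius, UnitDisc.coe_pow] at hsq
  intro z hz
  have hroot₀ : (2 : ℕ) * (moebius s (g z) : ℂ) ^ (2 - 1) ≠ 0 := by
    simpa using coe_moebius_ne_zero (hs z hz)
  refine (differentiableAt_of_comp (F := (· ^ 2)) (hasStrictDerivAt_pow 2 _) hroot₀ ?_
    ((hsq z hz).differentiableAt (hU.mem_nhds hz))).differentiableWithinAt
  exact (UnitDisc.continuous_coe.comp (continuous_moebius s)).continuousAt.comp
    (hg.continuousAt (hU.mem_nhds hz))

end KoebeLift

/-! ### Koebe's iteration -/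

section KoebeIteration

lemma isSimplyConnected_univ {X : Type*} [TopologicalSpace X] [SimplyConnectedSpace X] :
    IsSimplyConnected (univ : Set X) :=
  (Homeomorph.Set.univ X).toHomotopyEquiv.simplyConnectedSpace

variable {K : Type*} [TopologicalSpace K] {A : Set K} {f₀ : C(K, ℂ)} {ρ : ℝ} {U : Set 𝔻}

/-- The connected component of `x` in the preimage of the disc with centre `f₀ x` and
radius `ρ / 2`. The radius is halved so that the Schwarz–Pick lemma on the disc of radius `ρ`
applies with a uniform constant. -/
def patch (f₀ : C(K, ℂ)) (ρ : ℝ) (x : K) : Set K :=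
  connectedComponentIn (f₀ ⁻¹' ball (f₀ x) (ρ / 2)) x

lemma mem_patch_self (hρ : 0 < ρ) (x : K) : x ∈ patch f₀ ρ x :=
  mem_connectedComponentIn (mem_ball_self (half_pos hρ))

lemma dist_lt_of_mem_patch {x y : K} (hy : y ∈ patch f₀ ρ x) : dist (f₀ y) (f₀ x) < ρ / 2 :=
  mem_ball.1 (connectedComponentIn_subset (f₀ ⁻¹' ball (f₀ x) (ρ / 2)) x hy)

lemma mapsTo_patch (hρ : 0 < ρ) (x : K) : MapsTo f₀ (patch f₀ ρ x) (ball (f₀ x) ρ) :=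
  fun _ hy ↦ (dist_lt_of_mem_patch hy).trans (half_lt_self hρ)

lemma patch_mem_nhds [LocallyConnectedSpace K] (hρ : 0 < ρ) (x : K) : patch f₀ ρ x ∈ 𝓝 x :=
  ((isOpen_ball.preimage f₀.continuous).connectedComponentIn).mem_nhds (mem_patch_self hρ x)

/-- `f` is locally a holomorphic function of `f₀`: around every point `x` it is the composition
of `f₀` with a holomorphic map from the disc of centre `f₀ x` and radius `ρ` to `U`. This
survives lifting through Koebe maps, with the same `f₀` and `ρ`. -/
def IsLocallyHolomorphicIn (f₀ : C(K, ℂ)) (ρ : ℝ) (U : Set 𝔻) (f : K → 𝔻) : Prop :=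
  ∀ x, ∃ g : ℂ → 𝔻, DifferentiableOn ℂ (fun z ↦ (g z : ℂ)) (ball (f₀ x) ρ) ∧
    MapsTo g (ball (f₀ x) ρ) U ∧ EqOn f (g ∘ f₀) (patch f₀ ρ x)

lemma IsLocallyHolomorphicIn.norm_moebius_le_half {f : K → 𝔻}
    (hf : IsLocallyHolomorphicIn f₀ ρ U f) (hρ : 0 < ρ) {x y : K} (hy : y ∈ patch f₀ ρ x) :
    ‖(moebius (f x) (f y) : ℂ)‖ ≤ 1 / 2 := by
  obtain ⟨g, hg, -, hfg⟩ := hf x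
  rw [hfg (mem_patch_self hρ x), hfg hy]
  refine (norm_moebius_le_of_differentiableOn hg (mapsTo_patch hρ x hy)).trans ?_
  rw [div_le_iff₀ hρ]
  linarith [dist_lt_of_mem_patch hy]

section Harnack

variable [PreconnectedSpace K] [LocallyConnectedSpace K]

/-- Harnack's principle: the values of `f` at the points of a patch are at pseudo-hyperbolic
distance at most `1 / 2` from its value at the centre, whatever `f` is. -/
lemma exists_forall_mul_one_sub_sq_norm_le (f₀ : C(K, ℂ)) (hρ : 0 < ρ) (x y : K) :
    ∃ c > 0, ∀ (U : Set 𝔻) (f : K → 𝔻), IsLocallyHolomorphicIn f₀ ρ U f →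
      c * (1 - ‖(f x : ℂ)‖ ^ 2) ≤ 1 - ‖(f y : ℂ)‖ ^ 2 := by
  refine PreconnectedSpace.induction₂' (fun x y ↦ ∃ c > 0, ∀ (U : Set 𝔻) (f : K → 𝔻),
    IsLocallyHolomorphicIn f₀ ρ U f → c * (1 - ‖(f x : ℂ)‖ ^ 2) ≤ 1 - ‖(f y : ℂ)‖ ^ 2)
    (fun x ↦ ?_) ⟨?_⟩ x y
  · filter_upwards [patch_mem_nhds (f₀ := f₀) hρ x] with y hy
    refine ⟨⟨3 / 16, by norm_num, fun U f hf ↦ ?_⟩, ⟨3 / 16, by norm_num, fun U f hf ↦ ?_⟩⟩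
    · exact one_sub_sq_norm_le_of_norm_moebius_le_half (hf.norm_moebius_le_half hρ hy)
    · exact one_sub_sq_norm_le_of_norm_moebius_le_half
        (norm_moebius_comm _ _ ▸ hf.norm_moebius_le_half hρ hy)
  · rintro x y z ⟨c, hc, hxy⟩ ⟨d, hd, hyz⟩
    refine ⟨d * c, mul_pos hd hc, fun U f hf ↦ ?_⟩
    rw [mul_assoc]
    exact (mul_le_mul_of_nonneg_left (hxy U f hf) hd.le).trans (hyz U f hf)

lemma exists_lt_one_forall_sq_norm_le [CompactSpace K] (f₀ : C(K, ℂ)) (hρ : 0 < ρ) (a : K) :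
    ∃ r < 1, ∀ (U : Set 𝔻) (f : K → 𝔻), IsLocallyHolomorphicIn f₀ ρ U f → f a = 0 →
      ∀ y, ‖(f y : ℂ)‖ ^ 2 ≤ r := by
  suffices ∃ c > 0, ∀ (U : Set 𝔻) (f : K → 𝔻), IsLocallyHolomorphicIn f₀ ρ U f → f a = 0 →
      ∀ y ∈ univ, c ≤ 1 - ‖(f y : ℂ)‖ ^ 2 by
    obtain ⟨c, hc, h⟩ := this
    exact ⟨1 - c, by linarith, fun U f hf hfa y ↦ by linarith [h U f hf hfa y (mem_univ y)]⟩
  refine isCompact_univ.induction_on ⟨1, one_pos, by simp⟩ ?_ ?_ fun x _ ↦ ?_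
  · rintro s t hst ⟨c, hc, h⟩
    exact ⟨c, hc, fun U f hf hfa y hy ↦ h U f hf hfa y (hst hy)⟩
  · rintro s t ⟨c, hc, hs⟩ ⟨d, hd, ht⟩
    refine ⟨min c d, lt_min hc hd, fun U f hf hfa y hy ↦ ?_⟩
    rcases hy with hy | hy
    · exact (min_le_left c d).trans (hs U f hf hfa y hy)
    · exact (min_le_right c d).trans (ht U f hf hfa y hy)
  · obtain ⟨c, hc, hax⟩ := exists_forall_mul_one_sub_sq_norm_le f₀ hρ a x
    refine ⟨patch f₀ ρ x, mem_nhdsWithin_of_mem_nhds (patch_mem_nhds hρ x), 3 / 16 * c,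
      by positivity, fun U f hf hfa y hy ↦ ?_⟩
    have hxy := one_sub_sq_norm_le_of_norm_moebius_le_half (hf.norm_moebius_le_half hρ hy)
    have hax := hax U f hf
    rw [hfa, UnitDisc.coe_zero, norm_zero, zero_pow two_ne_zero, sub_zero, mul_one] at hax
    linarith

end Harnack

lemma exists_koebe_lift [SimplyConnectedSpace K] [LocallyPathConnectedSpace K]
    (hA : IsPreconnected A) {f : C(K, 𝔻)} (hfA : ∀ x ∈ A, f x = 0) {s : 𝔻}
    (hs : ∀ x, f x ≠ -s ^ (2 : ℕ+)) :
    ∃ f' : C(K, 𝔻), (∀ x, koebe s (f' x) = f x) ∧ ∀ x ∈ A, f' x = 0 := by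
  obtain ⟨h, hh, hhf⟩ := exists_continuousOn_koebe_eq isSimplyConnected_univ isOpen_univ
    f.continuous.continuousOn fun x _ ↦ hs x
  rw [continuousOn_univ] at hh
  rcases eqOn_or_eqOn_deck_of_koebe_eq hA (g₂ := fun _ ↦ 0) hh.continuousOn continuousOn_const
    (fun x hx ↦ by rw [hhf, hfA x hx, koebe_zero])
    (fun x hx ↦ by rw [koebe_zero, ← hfA x hx]; exact hs x) with h0 | h0
  · exact ⟨⟨h, hh⟩, hhf, h0⟩
  · refine ⟨⟨deck s ∘ h, (continuous_deck s).comp hh⟩, fun x ↦ ?_, fun x hx ↦ ?_⟩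
    · exact (koebe_deck s (h x)).trans (hhf x)
    · exact (congrArg (deck s) (h0 hx)).trans (deck_deck s 0)

lemma IsLocallyHolomorphicIn.of_koebe {f : K → 𝔻} {s : 𝔻} (hρ : 0 < ρ)
    (hf : IsLocallyHolomorphicIn f₀ ρ U fun x ↦ koebe s (f x)) (hfc : Continuous f)
    (hs : -s ^ (2 : ℕ+) ∉ U) : IsLocallyHolomorphicIn f₀ ρ (koebe s ⁻¹' U) f := by
  intro x
  obtain ⟨g, hg, hgU, hfg⟩ := hf x
  have hne {z : ℂ} (hz : z ∈ ball (f₀ x) ρ) : g z ≠ -s ^ (2 : ℕ+) :=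
    ne_of_mem_of_not_mem (hgU hz) hs
  have hgc : ContinuousOn g (ball (f₀ x) ρ) :=
    UnitDisc.isEmbedding_coe.continuousOn_iff.2 hg.continuousOn
  obtain ⟨h, hh, hhg⟩ := exists_continuousOn_koebe_eq
    (have := contractibleSpace_ball (x := f₀ x) hρ; .ofContractible _) isOpen_ball hgc
    fun z hz ↦ hne hz
  have hd (k : ℂ → 𝔻) (hk : ContinuousOn k (ball (f₀ x) ρ)) (hkg : ∀ z, koebe s (k z) = g z) :
      DifferentiableOn ℂ (fun z ↦ (k z : ℂ)) (ball (f₀ x) ρ) :=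
    differentiableOn_of_koebe_comp isOpen_ball hk (by simpa only [hkg]) fun z hz ↦ hkg z ▸ hne hz
  have hU (k : ℂ → 𝔻) (hkg : ∀ z, koebe s (k z) = g z) :
      MapsTo k (ball (f₀ x) ρ) (koebe s ⁻¹' U) := fun z hz ↦ by
    rw [mem_preimage, hkg]
    exact hgU hz
  have hdeck (z : ℂ) : koebe s (deck s (h z)) = g z := (koebe_deck s (h z)).trans (hhg z)
  have hmaps := mapsTo_patch (f₀ := f₀) hρ x
  rcases eqOn_or_eqOn_deck_of_koebe_eq isPreconnected_connectedComponentIn (s := s)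
    hfc.continuousOn (hh.comp f₀.continuous.continuousOn hmaps)
    (fun y hy ↦ (hfg hy).trans (hhg _).symm) (fun y hy ↦ (hhg (f₀ y)).symm ▸ hne (hmaps hy))
    with heq | heq
  · exact ⟨h, hd h hh hhg, hU h hhg, heq⟩
  · exact ⟨deck s ∘ h, hd _ ((continuous_deck s).comp_continuousOn hh) hdeck, hU _ hdeck, heq⟩

lemma exists_koebe_comp_eq [SimplyConnectedSpace K] [LocallyPathConnectedSpace K] (hρ : 0 < ρ)
    (hA : IsPreconnected A) {f : C(K, U)} (hf : IsLocallyHolomorphicIn f₀ ρ U fun x ↦ f x)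
    (hfA : ∀ x ∈ A, (f x : 𝔻) = 0) {s : 𝔻} (hs : -s ^ (2 : ℕ+) ∉ U) :
    ∃ f' : C(K, koebe s ⁻¹' U), (∀ x, koebe s (f' x) = f x) ∧ (∀ x ∈ A, (f' x : 𝔻) = 0) ∧
      IsLocallyHolomorphicIn f₀ ρ (koebe s ⁻¹' U) fun x ↦ f' x := by
  obtain ⟨f', hff', hf'A⟩ := exists_koebe_lift hA (f := ⟨fun x ↦ f x, by fun_prop⟩) hfA
    fun x ↦ ne_of_mem_of_not_mem (f x).2 hs
  have hf'U (x : K) : f' x ∈ koebe s ⁻¹' U := by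
    rw [mem_preimage, hff']
    exact (f x).2
  have hkf' : IsLocallyHolomorphicIn f₀ ρ U fun x ↦ koebe s (f' x) := by
    rwa [funext hff']
  exact ⟨⟨fun x ↦ ⟨f' x, hf'U x⟩, f'.continuous.subtype_mk _⟩, hff', hf'A,
    .of_koebe hρ hkf' f'.continuous hs⟩

lemma norm_symm_mul_le (t : I) (z : ℂ) : ‖((σ t : ℝ) : ℂ) * z‖ ≤ ‖z‖ := by
  rw [norm_mul, Complex.norm_real, Real.norm_of_nonneg (σ t).2.1]
  exact mul_le_of_le_one_left (norm_nonneg z) (σ t).2.2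

lemma nullhomotopicRel_of_sq_norm_le {f : C(K, U)} (hfA : ∀ x ∈ A, (f x : 𝔻) = 0) {r : ℝ}
    (hr : 0 ≤ r) (hf : ∀ x, ‖((f x : 𝔻) : ℂ)‖ ^ 2 ≤ r) (hU : {z : 𝔻 | ‖(z : ℂ)‖ ^ 2 ≤ r} ⊆ U) :
    NullhomotopicRel A f := by
  let F (t : I) (x : K) : 𝔻 :=
    .mk ((σ t : ℝ) * (f x : 𝔻)) ((norm_symm_mul_le t _).trans_lt (f x : 𝔻).norm_lt_one)
  have hF : Continuous (uncurry F) := UnitDisc.isEmbedding_coe.continuous_iff.2 <| by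
    have hfc : Continuous fun x ↦ ((f x : 𝔻) : ℂ) := UnitDisc.continuous_coe.comp (by fun_prop)
    exact .mul (by fun_prop) (hfc.comp continuous_snd)
  have hFU (t : I) (x : K) : F t x ∈ U :=
    hU ((pow_le_pow_left₀ (norm_nonneg _) (norm_symm_mul_le t _) 2).trans (hf x))
  refine ⟨⟨0, hU (by simpa using hr)⟩, ⟨⟨⟨⟨fun p ↦ ⟨uncurry F p, hFU p.1 p.2⟩,
    hF.subtype_mk _⟩, fun x ↦ ?_, fun x ↦ ?_⟩, fun t x hx ↦ ?_⟩⟩⟩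
  · simp [F]
  · simp [F]
  · simp [F, Subtype.ext_iff, hfA x hx]

lemma exists_unitDisc_sq_eq (z : 𝔻) : ∃ s : 𝔻, s ^ (2 : ℕ+) = z := by
  obtain ⟨s, hs⟩ := IsAlgClosed.exists_pow_nat_eq (z : ℂ) two_pos
  have hs1 : ‖s‖ < 1 := by
    rw [← sq_lt_one_iff₀ (norm_nonneg s), ← norm_pow, hs]
    exact z.norm_lt_one
  exact ⟨.mk s hs1, UnitDisc.coe_injective hs⟩

/-- Pulling `f` back through Koebe maps makes it grow, but not beyond the bound given by Harnack's
principle. -/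
lemma nullhomotopicRel_of_lt_sq_norm [SimplyConnectedSpace K] [LocallyPathConnectedSpace K]
    (hρ : 0 < ρ) (hA : IsPreconnected A) {r : ℝ} (hr : r < 1)
    (hbound : ∀ (U : Set 𝔻) (f : K → 𝔻), IsLocallyHolomorphicIn f₀ ρ U f → (∀ x ∈ A, f x = 0) →
      ∀ y, ‖(f y : ℂ)‖ ^ 2 ≤ r) (y : K) (n : ℕ) {U : Set 𝔻} {f : C(K, U)}
    (hf : IsLocallyHolomorphicIn f₀ ρ U fun x ↦ f x) (hfA : ∀ x ∈ A, (f x : 𝔻) = 0)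
    (hn : (1 - (1 - r) ^ 3 / 64) ^ n < ‖((f y : 𝔻) : ℂ)‖ ^ 2) : NullhomotopicRel A f := by
  induction n generalizing U with
  | zero => exact absurd hn (by simpa using (UnitDisc.sq_norm_lt_one _).le)
  | succ n ih =>
    have hr₀ : 0 ≤ r := (sq_nonneg _).trans (hbound U _ hf hfA y)
    by_cases hU : {z : 𝔻 | ‖(z : ℂ)‖ ^ 2 ≤ r} ⊆ U
    · exact nullhomotopicRel_of_sq_norm_le hfA hr₀ (hbound U _ hf hfA) hU
    obtain ⟨z, hzr, hzU⟩ := not_subset.1 hU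
    obtain ⟨s, hs⟩ := exists_unitDisc_sq_eq (-z)
    have hsU : -s ^ (2 : ℕ+) ∉ U := by rwa [hs, neg_neg]
    obtain ⟨f', hff', hf'A, hf'⟩ := exists_koebe_comp_eq hρ hA hf hfA hsU
    have hcontr : ‖((f y : 𝔻) : ℂ)‖ ^ 2 ≤ (1 - (1 - r) ^ 3 / 64) * ‖((f' y : 𝔻) : ℂ)‖ ^ 2 := by
      rw [← hff']
      exact sq_norm_koebe_le (by simpa [hs] using hzr) (hbound _ _ hf' hf'A y) hr.le
    have hκ : 0 < 1 - (1 - r) ^ 3 / 64 := by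
      have : (1 - r) ^ 3 ≤ 1 := pow_le_one₀ (by linarith) (by linarith)
      linarith
    have hnull := ih hf' hf'A (by
      rw [pow_succ'] at hn
      exact lt_of_mul_lt_mul_left (hn.trans_le hcontr) hκ.le)
    convert hnull.postcomp (ContinuousMap.restrictPreimage ⟨koebe s, continuous_koebe s⟩ U) using 1
    ext x
    exact congrArg UnitDisc.coe (hff' x).symm

lemma exists_isLocallyHolomorphicIn [CompactSpace K] (hU : IsOpen U) (f : C(K, U)) :
    ∃ (f₀ : C(K, ℂ)) (ρ : ℝ), 0 < ρ ∧ IsLocallyHolomorphicIn f₀ ρ U fun x ↦ f x := by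
  let f₀ : C(K, ℂ) := ⟨fun x ↦ (f x : 𝔻), UnitDisc.continuous_coe.comp (by fun_prop)⟩
  have hV : IsOpen (UnitDisc.coe '' U) := isOpen_ball.isOpenEmbedding_subtypeVal.isOpenMap U hU
  have hfV : range f₀ ⊆ UnitDisc.coe '' U := by
    rintro _ ⟨x, rfl⟩
    exact mem_image_of_mem _ (f x).2
  obtain ⟨ρ, hρ, hρV⟩ := (isCompact_range f₀.continuous).exists_thickening_subset_open hV hfV
  obtain ⟨g, hg⟩ := UnitDisc.coe_injective.hasLeftInverse
  refine ⟨f₀, ρ, hρ, fun x ↦ ⟨g, ?_, ?_, fun y _ ↦ (hg _).symm⟩⟩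
  all_goals
    have hball : ball (f₀ x) ρ ⊆ UnitDisc.coe '' U :=
      (ball_subset_thickening (mem_range_self x) ρ).trans hρV
  · refine differentiableOn_id.congr fun z hz ↦ ?_
    obtain ⟨w, -, rfl⟩ := hball hz
    rw [hg, id]
  · intro z hz
    obtain ⟨w, hw, rfl⟩ := hball hz
    rwa [hg]

lemma nullhomotopicRel_of_eq_zero [CompactSpace K] [SimplyConnectedSpace K]
    [LocallyPathConnectedSpace K] (hA : IsConnected A) (hU : IsOpen U) (f : C(K, U))
    (hfA : ∀ x ∈ A, (f x : 𝔻) = 0) : NullhomotopicRel A f := by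
  obtain ⟨a, ha⟩ := hA.nonempty
  by_cases hf0 : ∀ y, (f y : 𝔻) = 0
  · refine ⟨f a, ?_⟩
    rw [show f = .const K (f a) from ContinuousMap.ext fun y ↦
      Subtype.ext ((hf0 y).trans (hf0 a).symm)]
    exact .refl _
  push Not at hf0
  obtain ⟨y, hy⟩ := hf0
  obtain ⟨f₀, ρ, hρ, hf⟩ := exists_isLocallyHolomorphicIn hU f
  obtain ⟨r, hr, hbound⟩ := exists_lt_one_forall_sq_norm_le f₀ hρ a
  obtain ⟨n, hn⟩ := exists_pow_lt_of_lt_one (x := ‖((f y : 𝔻) : ℂ)‖ ^ 2)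
    (by simpa [sq_pos_iff] using hy) (show 1 - (1 - r) ^ 3 / 64 < 1 by
      have : 0 < (1 - r) ^ 3 := pow_pos (sub_pos.2 hr) 3
      linarith)
  exact nullhomotopicRel_of_lt_sq_norm hρ hA.isPreconnected hr
    (fun U f hf hfA ↦ hbound U f hf (hfA a ha)) y n hf hfA hn

theorem isAsphericalRel_of_isOpen [CompactSpace K] [SimplyConnectedSpace K]
    [LocallyPathConnectedSpace K] (hA : IsConnected A) {V : Set ℂ} (hV : IsOpen V) :
    IsAsphericalRel A V := by
  intro f hf
  obtain ⟨a, ha⟩ := hA.nonempty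
  have hfc : Continuous fun x ↦ (f x : ℂ) := by fun_prop
  obtain ⟨S, hS₀, hS⟩ := (isCompact_range hfc).isBounded.subset_ball_lt 0 (f a : ℂ)
  have hS₀' : (S : ℂ) ≠ 0 := Complex.ofReal_ne_zero.2 hS₀.ne'
  let φ : C(𝔻, ℂ) := ⟨fun w ↦ f a + S * w,
    continuous_const.add (continuous_const.mul UnitDisc.continuous_coe)⟩
  let h (x : K) : 𝔻 := .mk ((f x - f a) / S) <| by
    rw [norm_div, Complex.norm_real, Real.norm_of_nonneg hS₀.le, div_lt_one hS₀, ← dist_eq_norm]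
    exact hS (mem_range_self x)
  have hφh (x : K) : φ (h x) = f x := by
    change (f a : ℂ) + S * ((f x - f a) / S) = f x
    rw [mul_div_cancel₀ _ hS₀', add_sub_cancel]
  have hh : Continuous h :=
    UnitDisc.isEmbedding_coe.continuous_iff.2 ((hfc.sub continuous_const).div_const _)
  have hhV (x : K) : h x ∈ φ ⁻¹' V := by
    rw [mem_preimage, hφh]
    exact (f x).2
  let g : C(K, φ ⁻¹' V) := ⟨fun x ↦ ⟨h x, hhV x⟩, hh.subtype_mk hhV⟩
  have hgA (x : K) (hx : x ∈ A) : (g x : 𝔻) = 0 := by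
    have : f x = f a := hf (mem_image_of_mem f hx) (mem_image_of_mem f ha)
    simp [g, h, this]
  convert (nullhomotopicRel_of_eq_zero hA (hV.preimage φ.continuous) g hgA).postcomp
    (φ.restrictPreimage V) using 1
  ext x
  exact (hφh x).symm

end KoebeIteration

/-! ### Fibrations of configuration spaces -/

section LocalTransport

variable {K X Y : Type*} [TopologicalSpace K] [TopologicalSpace X] [TopologicalSpace Y]

lemma exists_pos_forall_dist_lt_of_diagonal [CompactSpace K] {W : Set (Y × Y)} (hW : IsOpen W)
    (hdiag : ∀ y, (y, y) ∈ W) (H : C(I × K, Y)) :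
    ∃ δ > 0, ∀ s t, dist s t < δ → ∀ x, (H (s, x), H (t, x)) ∈ W := by
  have hopen : IsOpen {z : I × I | ∀ x, (H (z.1, x), H (z.2, x)) ∈ W} := by
    have hcont : Continuous fun w : (I × I) × K ↦ (H (w.1.1, w.2), H (w.1.2, w.2)) := by fun_prop
    have hclosed := isClosedMap_fst_of_compactSpace _ (hW.preimage hcont).isClosed_compl
    convert hclosed.isOpen_compl using 1
    ext z
    simp
  have hnhds : {z : I × I | ∀ x, (H (z.1, x), H (z.2, x)) ∈ W} ∈ uniformity I := by
    rw [← nhdsSet_diagonal_eq_uniformity, hopen.mem_nhdsSet]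
    rintro ⟨s, t⟩ (rfl : s = t) x
    exact hdiag _
  obtain ⟨δ, hδ, h⟩ := Metric.mem_uniformity_dist.1 hnhds
  exact ⟨δ, hδ, fun s t hst ↦ h hst⟩

/-- The map `Φ` carries points over `b` to points over any `b'` close to `b`, and a homotopy is
lifted by applying it along a subdivision of the time interval. -/
theorem hasRegularLifting_of_transport [CompactSpace K] {p : C(X, Y)} {W : Set (Y × Y)}
    (hW : IsOpen W) (hdiag : ∀ y, (y, y) ∈ W) (Φ : C({z : X × Y // (p z.1, z.2) ∈ W}, X))
    (hpΦ : ∀ z, p (Φ z) = z.1.2) (hΦ : ∀ z, p z.1.1 = z.1.2 → Φ z = z.1.1) :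
    HasRegularLifting K p := by
  intro H g hg
  obtain ⟨δ, hδ, hHW⟩ := exists_pos_forall_dist_lt_of_diagonal hW hdiag H
  obtain ⟨N, hN⟩ := exists_nat_one_div_lt hδ
  let τ (k : ℕ) : I := projIcc 0 1 zero_le_one (k / (N + 1))
  have hτ (k : ℕ) (t : I) : dist (min t (τ k)) (min t (τ (k + 1))) < δ := calc
    dist (min t (τ k)) (min t (τ (k + 1))) ≤ max |(t - t : ℝ)| |(τ k - τ (k + 1) : ℝ)| :=
      abs_min_sub_min_le_max _ _ _ _
    _ = |(τ k - τ (k + 1) : ℝ)| := by rw [sub_self, abs_zero, max_eq_right (abs_nonneg _)]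
    _ ≤ |(k / (N + 1) - (k + 1 : ℕ) / (N + 1) : ℝ)| := abs_projIcc_sub_projIcc zero_le_one
    _ = 1 / (N + 1) := by
      rw [← sub_div, Nat.cast_succ, sub_add_cancel_left, neg_div, abs_neg,
        abs_of_pos (by positivity)]
    _ < δ := hN
  suffices h : ∀ k, ∃ G : C(I × K, X), (∀ t y, p (G (t, y)) = H (min t (τ k), y)) ∧
      ∀ t y, (∀ s ≤ t, H (s, y) = H (0, y)) → G (t, y) = g y by
    obtain ⟨G, hpG, hG⟩ := h (N + 1)
    have hτN : τ (N + 1) = 1 := by simp [τ, div_self (Nat.cast_add_one_ne_zero (R := ℝ) N)]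
    refine ⟨G, fun z ↦ ?_, fun y ↦ hG 0 y fun s hs ↦ ?_, fun y hy t ↦ hG t y fun s _ ↦ hy s⟩
    · rw [hpG, hτN, min_eq_left le_one']
    · rw [nonpos_iff_eq_zero.1 hs]
  intro k
  induction k with
  | zero =>
    refine ⟨g.comp ⟨Prod.snd, continuous_snd⟩, fun t y ↦ ?_, fun t y _ ↦ rfl⟩
    simp [τ, hg]
  | succ k ih =>
    obtain ⟨G, hpG, hG⟩ := ih
    have hGW (z : I × K) : (p (G z), H (min z.1 (τ (k + 1)), z.2)) ∈ W := by
      rw [hpG]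
      exact hHW _ _ (hτ k z.1) z.2
    refine ⟨Φ.comp ⟨fun z ↦ ⟨(G z, H (min z.1 (τ (k + 1)), z.2)), hGW z⟩, by fun_prop⟩,
      fun t y ↦ hpΦ _, fun t y ht ↦ ?_⟩
    refine (hΦ _ ?_).trans (hG t y ht)
    exact (hpG t y).trans ((ht _ (min_le_left _ _)).trans (ht _ (min_le_left _ _)).symm)

end LocalTransport

section Push

variable {ι E : Type*} [Fintype ι] [NormedAddCommGroup E] [NormedSpace ℝ E] {ε : ℝ}
  {c c' : ι → E} {z : E}

/-- The map that moves each `c i` to `c' i` and drags along the points at distance less than `ε`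
from `c i`. -/
noncomputable def push (ε : ℝ) (c c' : ι → E) (z : E) : E :=
  z + ∑ i, max 0 (1 - dist z (c i) / ε) • (c' i - c i)

lemma push_self (ε : ℝ) (c : ι → E) (z : E) : push ε c c z = z := by
  simp [push]

lemma push_eq_self (hε : 0 < ε) (hz : ∀ i, ε ≤ dist z (c i)) : push ε c c' z = z := by
  have h (i : ι) : max 0 (1 - dist z (c i) / ε) = 0 :=
    max_eq_left (sub_nonpos.2 ((one_le_div₀ hε).2 (hz i)))
  simp [push, h]

lemma push_apply (hε : 0 < ε) (hc : Pairwise fun i j ↦ ε ≤ dist (c i) (c j)) (j : ι) :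
    push ε c c' (c j) = c' j := by
  have h (i : ι) (hi : i ≠ j) : max 0 (1 - dist (c j) (c i) / ε) = 0 :=
    max_eq_left (sub_nonpos.2 ((one_le_div₀ hε).2 (hc hi.symm)))
  rw [push, Fintype.sum_eq_single j fun i hi ↦ by rw [h i hi, zero_smul]]
  simp

lemma push_injective (hε : 0 < ε) (hc : Fintype.card ι * dist c c' < ε) :
    Injective (push ε c c') := by
  intro z w hzw
  have hbump (i : ι) : |max 0 (1 - dist w (c i) / ε) - max 0 (1 - dist z (c i) / ε)| ≤
      dist z w / ε := calc
    _ ≤ max |0 - 0| |(1 - dist w (c i) / ε) - (1 - dist z (c i) / ε)| :=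
      abs_max_sub_max_le_max _ _ _ _
    _ = |dist z (c i) - dist w (c i)| / ε := by
      rw [sub_self, abs_zero, max_eq_right (abs_nonneg _), sub_sub_sub_cancel_left, ← sub_div,
        abs_div, abs_of_pos hε]
    _ ≤ dist z w / ε := by
      gcongr
      exact abs_dist_sub_le z w (c i)
  have hdist : dist z w ≤ Fintype.card ι * dist c c' / ε * dist z w := calc
    dist z w = ‖∑ i, (max 0 (1 - dist w (c i) / ε) - max 0 (1 - dist z (c i) / ε)) •
        (c' i - c i)‖ := by
      rw [dist_eq_norm]
      simp only [push, sub_smul, Finset.sum_sub_distrib] at hzw ⊢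
      rw [sub_eq_sub_iff_add_eq_add.2 (hzw.trans (add_comm _ _))]
    _ ≤ ∑ _i : ι, dist z w / ε * dist c c' := by
      refine norm_sum_le_of_le _ fun i _ ↦ ?_
      rw [norm_smul, ← dist_eq_norm (c' i), dist_comm (c' i), Real.norm_eq_abs]
      exact mul_le_mul (hbump i) (dist_le_pi_dist c c' i) dist_nonneg (by positivity)
    _ = Fintype.card ι * dist c c' / ε * dist z w := by
      rw [Finset.sum_const, Finset.card_univ, nsmul_eq_mul]
      ring
  by_contra hne
  have := (div_lt_one hε).2 hc
  nlinarith [dist_pos.2 hne]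

lemma continuous_push {T : Type*} [TopologicalSpace T] {ε : T → ℝ} {c c' : T → ι → E} {z : T → E}
    (hε : Continuous ε) (hc : Continuous c) (hc' : Continuous c') (hz : Continuous z)
    (hε₀ : ∀ t, ε t ≠ 0) : Continuous fun t ↦ push (ε t) (c t) (c' t) (z t) := by
  unfold push
  fun_prop (disch := assumption)

end Push

/-- The space of configurations of `n` distinct points of `Y` that avoid `P`. -/
abbrev ConfigurationSpace {Y : Type*} (P : Set Y) (n : ℕ) : Type _ :=
  {f : Fin n → Y // Injective f ∧ ∀ i, f i ∉ P}

lemma exists_continuous_pos_ball_subset {M : Type*} [PseudoMetricSpace M] {U : Set M}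
    (hU : IsOpen U) : ∃ ε : C(U, ℝ), ∀ x, 0 < ε x ∧ ball (x : M) (ε x) ⊆ U := by
  rcases Uᶜ.eq_empty_or_nonempty with hUc | hUc
  · exact ⟨.const U 1, fun x ↦ ⟨one_pos, by simp [compl_empty_iff.1 hUc]⟩⟩
  · refine ⟨⟨fun x ↦ infDist (x : M) Uᶜ, by fun_prop⟩, fun x ↦ ⟨?_, ball_infDist_compl_subset⟩⟩
    exact (hU.isClosed_compl.notMem_iff_infDist_pos hUc).1 (not_not_intro x.2)

namespace ConfigurationSpace

section Forget

variable {Y : Type*} {P : Set Y} {n : ℕ}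

lemma injective_and_notMem_snoc {c : Fin n → Y} {z : Y} (hc : Injective c ∧ ∀ i, c i ∉ P)
    (hz : z ∉ P ∪ range c) :
    Injective (Fin.snoc c z : Fin (n + 1) → Y) ∧
      ∀ i, (Fin.snoc c z : Fin (n + 1) → Y) i ∉ P := by
  refine ⟨Fin.snoc_injective_iff.2 ⟨hc.1, fun h ↦ hz (.inr h)⟩, Fin.lastCases ?_ fun i ↦ ?_⟩
  · simpa using fun h ↦ hz (.inl h)
  · simpa using hc.2 i

variable [TopologicalSpace Y]

lemma continuous_eval (i : Fin n) : Continuous fun f : ConfigurationSpace P n ↦ f.1 i :=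
  (continuous_apply i).comp continuous_subtype_val

/-- The map that forgets the last point of a configuration. -/
def forget (P : Set Y) (n : ℕ) : C(ConfigurationSpace P (n + 1), ConfigurationSpace P n) where
  toFun f := ⟨Fin.init f.1, f.2.1.comp (Fin.castSucc_injective n), fun i ↦ f.2.2 i.castSucc⟩
  continuous_toFun := .subtype_mk (continuous_pi fun i : Fin n ↦ continuous_eval i.castSucc) _

lemma last_notMem (f : ConfigurationSpace P (n + 1)) :
    f.1 (Fin.last n) ∉ P ∪ range (forget P n f).1 := by
  rintro (h | ⟨i, h⟩)
  · exact f.2.2 _ h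
  · exact (Fin.castSucc_lt_last i).ne (f.2.1 h)

lemma isAsphericalRel_fiber {K : Type*} [TopologicalSpace K] {A : Set K}
    {c : ConfigurationSpace P n} (h : IsAsphericalRel A ((P ∪ range c.1)ᶜ : Set Y)) :
    IsAsphericalRel A (forget P n ⁻¹' {c}) := by
  have hlast (f : forget P n ⁻¹' {c}) : f.1.1 (Fin.last n) ∉ P ∪ range c.1 := by
    obtain ⟨f, rfl⟩ := f
    exact last_notMem f
  let i : C(forget P n ⁻¹' {c}, ((P ∪ range c.1)ᶜ : Set Y)) :=
    ⟨fun f ↦ ⟨f.1.1 (Fin.last n), hlast f⟩,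
      ((continuous_eval (Fin.last n)).comp continuous_subtype_val).subtype_mk _⟩
  let r : C(((P ∪ range c.1)ᶜ : Set Y), forget P n ⁻¹' {c}) :=
    ⟨fun z ↦ ⟨⟨Fin.snoc c.1 z.1, injective_and_notMem_snoc c.2 z.2⟩,
      Subtype.ext (Fin.init_snoc (α := fun _ ↦ Y) z.1 c.1)⟩, by fun_prop⟩
  refine h.of_leftInverse (i := i) (r := r) ?_
  rintro ⟨f, rfl⟩
  exact Subtype.ext (Subtype.ext (Fin.snoc_init_self f.1))

lemma isOpen_setOf_injective_and_notMem [T2Space Y] (hP : IsClosed P) (n : ℕ) :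
    IsOpen {c : Fin n → Y | Injective c ∧ ∀ i, c i ∉ P} := by
  have hinj : {c : Fin n → Y | Injective c} = ⋂ (i) (j) (_ : i ≠ j), {c | c i ≠ c j} := by
    ext c
    simp [Injective, not_imp_not]
  refine .inter ?_ ?_
  · change IsOpen {c : Fin n → Y | Injective c}
    rw [hinj]
    exact isOpen_iInter_of_finite fun i ↦ isOpen_iInter_of_finite fun j ↦
      isOpen_iInter_of_finite fun _ ↦ isOpen_ne_fun (by fun_prop) (by fun_prop)
  · change IsOpen {c : Fin n → Y | ∀ i, c i ∉ P}
    rw [ofPred_forall]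
    exact isOpen_iInter_of_finite fun i ↦ (hP.preimage (continuous_apply i)).isOpen_compl

end Forget

lemma le_dist_of_ball_subset {M : Type*} [PseudoMetricSpace M] {P : Set M} {n : ℕ}
    {c : Fin n → M} {ε : ℝ} (h : ball c ε ⊆ {c | Injective c ∧ ∀ i, c i ∉ P}) {i : Fin n} {z : M}
    (hz : z ∈ P ∪ c '' {i}ᶜ) : ε ≤ dist z (c i) := by
  by_contra! hlt
  obtain ⟨hinj, hP⟩ := @h (update c i z) (by
    rw [mem_ball, dist_pi_lt_iff (dist_nonneg.trans_lt hlt)]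
    intro j
    rcases eq_or_ne j i with rfl | hj
    · rwa [update_self]
    · rw [update_of_ne hj, dist_self]
      exact dist_nonneg.trans_lt hlt)
  rcases hz with hz | ⟨j, hj, rfl⟩
  · exact hP i (by rwa [update_self])
  · exact hj (hinj (by rw [update_self, update_of_ne hj]))

section Normed

variable {E : Type*} [NormedAddCommGroup E] [NormedSpace ℝ E] {P : Set E} {n : ℕ}

lemma push_notMem {c : Fin n → E} {ε : ℝ} (h : ball c ε ⊆ {c | Injective c ∧ ∀ i, c i ∉ P})
    (hε : 0 < ε) {c' : Fin n → E} (hc : n * dist c c' < ε) {z : E} (hz : z ∉ P ∪ range c) :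
    push ε c c' z ∉ P ∪ range c' := by
  have hinj : Injective (push ε c c') := push_injective hε (by rwa [Fintype.card_fin])
  rintro (hP | ⟨j, hj⟩)
  · refine hz (.inl ?_)
    rwa [hinj (push_eq_self hε fun i ↦ le_dist_of_ball_subset h (.inl hP))] at hP
  · refine hz (.inr ⟨j, hinj ?_⟩)
    rw [← hj]
    exact push_apply hε (fun i k hik ↦ le_dist_of_ball_subset h (.inr ⟨i, hik, rfl⟩)) j

lemma hasRegularLifting_forget {K : Type*} [TopologicalSpace K] [CompactSpace K]
    (hP : IsClosed P) (n : ℕ) : HasRegularLifting K (forget P n) := by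
  obtain ⟨ε, hε⟩ := exists_continuous_pos_ball_subset (isOpen_setOf_injective_and_notMem hP n)
  let W : Set (ConfigurationSpace P n × ConfigurationSpace P n) :=
    {z | n * dist z.1.1 z.2.1 < ε z.1}
  let z' (w : {z : ConfigurationSpace P (n + 1) × ConfigurationSpace P n //
      (forget P n z.1, z.2) ∈ W}) : E :=
    push (ε (forget P n w.1.1)) (forget P n w.1.1).1 w.1.2.1 (w.1.1.1 (Fin.last n))
  have hz' : Continuous z' := continuous_push (by fun_prop) (by fun_prop) (by fun_prop)
    ((continuous_eval (Fin.last n)).comp (by fun_prop)) fun w ↦ (hε _).1.ne'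
  refine hasRegularLifting_of_transport (W := W) (isOpen_lt (by fun_prop) (by fun_prop))
    (fun c ↦ by simpa [W] using (hε c).1)
    ⟨fun w ↦ ⟨Fin.snoc w.1.2.1 (z' w), injective_and_notMem_snoc w.1.2.2
      (push_notMem (hε _).2 (hε _).1 w.2 (last_notMem w.1.1))⟩, by fun_prop⟩
    (fun w ↦ ?_) fun w hw ↦ ?_
  · exact Subtype.ext (Fin.init_snoc (α := fun _ ↦ E) _ _)
  · refine Subtype.ext ?_
    have : z' w = w.1.1.1 (Fin.last n) := by
      simp only [z', hw, push_self]
    change Fin.snoc w.1.2.1 (z' w) = w.1.1.1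
    rw [this, ← hw]
    exact Fin.snoc_init_self w.1.1.1

end Normed

theorem isAsphericalRel_complex {K : Type*} [TopologicalSpace K] [CompactSpace K]
    [SimplyConnectedSpace K] [LocallyPathConnectedSpace K] {A : Set K} (hA : IsConnected A)
    {P : Set ℂ} (hP : IsClosed P) (n : ℕ) : IsAsphericalRel A (ConfigurationSpace P n) := by
  induction n with
  | zero =>
    have : Subsingleton (ConfigurationSpace P 0) := ⟨fun f g ↦ Subtype.ext (Subsingleton.elim _ _)⟩
    have : Nonempty K := hA.nonempty.to_type
    exact isAsphericalRel_of_subsingleton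
  | succ n ih =>
    exact .of_fibration (hasRegularLifting_forget hP n) ih fun c ↦ isAsphericalRel_fiber
      (isAsphericalRel_of_isOpen hA (hP.union (finite_range c.1).isClosed).isOpen_compl)

end ConfigurationSpace

/-! ### Homotopy groups -/

section Cube

variable {N : Type*}

instance : ContractibleSpace (N → I) := by
  rw [contractible_iff_id_nullhomotopic]
  refine ⟨0, ⟨⟨⟨fun p i ↦ σ p.1 * p.2 i, by fun_prop⟩, fun y ↦ ?_, fun y ↦ ?_⟩⟩⟩
  · ext i
    simp
  · ext i
    simp

instance : LocallyPathConnectedSpace (N → I) := by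
  have hq : IsQuotientMap fun (f : N → ℝ) i ↦ projIcc (0 : ℝ) 1 zero_le_one (f i) :=
    .of_inverse (f := fun (y : N → I) i ↦ (y i : ℝ)) (by fun_prop) (by fun_prop)
      fun y ↦ funext fun i ↦ projIcc_val zero_le_one (y i)
  exact hq.locallyPathConnectedSpace

lemma cube_boundary_nonempty [Nonempty N] : (Cube.boundary N).Nonempty :=
  ⟨0, Classical.arbitrary N, .inl rfl⟩

lemma isPreconnected_setOf_apply_eq (i : N) (e : I) : IsPreconnected {y : N → I | y i = e} := by
  classical
  have : {y : N → I | y i = e} = range fun y ↦ update y i e := by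
    ext y
    refine ⟨fun h ↦ ⟨y, ?_⟩, ?_⟩
    · exact h ▸ update_eq_self i y
    · rintro ⟨y, rfl⟩
      exact update_self i e y
  rw [this]
  exact isPreconnected_range (by fun_prop)

lemma isConnected_cube_boundary [Nontrivial N] : IsConnected (Cube.boundary N) := by
  classical
  refine ⟨cube_boundary_nonempty, isPreconnected_of_forall 0 fun y ⟨i, hy⟩ ↦ ?_⟩
  obtain ⟨j, hj⟩ := exists_ne i
  have hunion : IsPreconnected ({z : N → I | z i = y i} ∪ {z | z j = 0}) :=
    .union (update y j 0) (update_of_ne hj.symm _ _) (update_self ..)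
      (isPreconnected_setOf_apply_eq i _) (isPreconnected_setOf_apply_eq j 0)
  refine ⟨_, ?_, .inr rfl, .inl rfl, hunion⟩
  rintro z (hz | hz)
  · exact ⟨i, by rwa [show z i = y i from hz]⟩
  · exact ⟨j, .inl hz⟩

lemma IsAsphericalRel.subsingleton_homotopyGroup [Nonempty N] {X : Type*} [TopologicalSpace X]
    (hX : IsAsphericalRel (Cube.boundary N) X) (x : X) : Subsingleton (HomotopyGroup N X x) := by
  have hconst (f : GenLoop N X x) : f.1.HomotopicRel (.const _ x) (Cube.boundary N) := by
    obtain ⟨e, he⟩ := hX f.1 (subsingleton_of_forall_eq x fun _ ⟨y, hy, h⟩ ↦ h ▸ f.2 y hy)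
    obtain ⟨y, hy⟩ := cube_boundary_nonempty (N := N)
    rwa [← show f.1 y = e from he.some.fst_eq_snd hy, f.2 y hy] at he
  exact ⟨Quotient.ind₂ fun f g ↦ Quotient.sound ((hconst f).trans (hconst g).symm)⟩

end Cube

theorem configurationSpace_complex_aspherical_general (P : Set ℂ) (hP : IsClosed P) (n : ℕ)
    {N : Type*} [Nontrivial N] (x : {f : Fin n → ℂ // Injective f ∧ ∀ i, f i ∉ P}) :
    Subsingleton (HomotopyGroup N {f : Fin n → ℂ // Injective f ∧ ∀ i, f i ∉ P} x) :=
  IsAsphericalRel.subsingleton_homotopyGroup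
    (ConfigurationSpace.isAsphericalRel_complex isConnected_cube_boundary hP n) x

/-- The configuration space of `n` ordered points in `ℂ` avoiding a finite
set `P` is aspherical: all its homotopy groups `π_k`, `k ≥ 2`, are trivial. -/
theorem configurationSpace_complex_aspherical
    (P : Set ℂ) (hP : P.Finite) (n : ℕ) :
    ∀ k : ℕ, 2 ≤ k →
      ∀ x : {f : Fin n → ℂ // Function.Injective f ∧ ∀ i, f i ∉ P},
        Subsingleton
          (HomotopyGroup (Fin k)
            {f : Fin n → ℂ // Function.Injective f ∧ ∀ i, f i ∉ P} x) := by
  intro k hk x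
  have := Fin.nontrivial_iff_two_le.2 hk
  exact configurationSpace_complex_aspherical_general P hP.isClosed n x
end

section
/- Let n ≥ 1, let Conf_n(ℂ) = {f : Fin n → ℂ | f injective} be the ordered configuration space of n points in ℂ, let x be a basepoint of Conf_n(ℂ), and let P = π₁(Conf_n(ℂ), x) be its fundamental group (the pure braid group on n strands). Then P admits a filtration by subgroups 1 = G₀ ≤ G₁ ≤ ⋯ ≤ Gₙ = P such that each Gᵢ is a normal subgroup of P and, for each i < n, the quotient group G_{i+1}/Gᵢ is a finitely generated free group. -/
/-!
Forgetting one point is a projection `Conf (n + 1) ℂ → Conf n ℂ` whose fibres are planes with `n`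
punctures, and adding a point far away from the others is a section of it. Moving configurations by
damped translations of the plane gives the projection enough path lifting for the short exact
sequence of fundamental groups: `π₁` of the fibre injects, thanks to the section, onto the kernel of
a surjection onto `π₁ (Conf n ℂ)`. Pulling back a filtration of the latter adds one step, the free
group `π₁` of the fibre.

That `π₁` of the punctured plane is free is seen after rotating so that the punctures have distinct
real parts. Cutting vertically downwards, respectively upwards, from all punctures leaves two simply
connected open sets that overlap in `n + 1` strips. The loops crossing a given strip from one set
to the other generate, by a subdivision argument, and they are free because they act by left
translations on the fibre of a covering with structure group `FreeGroup (Fin n)`, glued from two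
trivial pieces along the strips.
-/

open scoped unitInterval Topology

namespace PureBraid

section PolyFree

variable {P Q : Type*} [Group P] [Group Q]

/-- The quotient `K / H` of subgroups `H ≤ K` of `P` is a free group of finite rank, encoded by a
surjection from `K` onto a free group with kernel `H`. -/
def HasFGFreeQuotient (H K : Subgroup P) : Prop :=
  ∃ (k : ℕ) (ψ : K →* FreeGroup (Fin k)),
    Function.Surjective ψ ∧ ∀ g : K, ψ g = 1 ↔ (g : P) ∈ H

/-- `P` is strongly poly-free of length `n`: it has a filtration `1 = G₀ ≤ ⋯ ≤ Gₙ = P` by normal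
subgroups of `P` whose successive quotients are free of finite rank. -/
def IsStronglyPolyFree (P : Type*) [Group P] (n : ℕ) : Prop :=
  ∃ G : Fin (n + 1) → Subgroup P,
    G 0 = ⊥ ∧ G (Fin.last n) = ⊤ ∧ (∀ i, (G i).Normal) ∧
    (∀ i : Fin n, G i.castSucc ≤ G i.succ) ∧
    ∀ i : Fin n, HasFGFreeQuotient (G i.castSucc) (G i.succ)

theorem HasFGFreeQuotient.comap {H K : Subgroup Q} (h : HasFGFreeQuotient H K) {φ : P →* Q}
    (hφ : Function.Surjective φ) : HasFGFreeQuotient (H.comap φ) (K.comap φ) := by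
  obtain ⟨k, ψ, hψ, hker⟩ := h
  exact ⟨k, ψ.comp (φ.subgroupComap K),
    hψ.comp (φ.subgroupComap_surjective_of_surjective K hφ), fun g => hker (φ.subgroupComap K g)⟩

theorem hasFGFreeQuotient_bot {k : ℕ} {K : Subgroup P} (e : FreeGroup (Fin k) ≃* K) :
    HasFGFreeQuotient ⊥ K :=
  ⟨k, e.symm, e.symm.surjective, fun g => by simp [Subgroup.mem_bot]⟩

theorem isStronglyPolyFree_zero [Subsingleton P] : IsStronglyPolyFree P 0 :=
  ⟨fun _ => ⊥, rfl, Subsingleton.elim _ _, fun _ => inferInstance, nofun, nofun⟩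

/-- The filtration of `P` consists of `⊥` and the preimages of the filtration of `Q`. -/
theorem IsStronglyPolyFree.of_surjective {n k : ℕ} (hQ : IsStronglyPolyFree Q n) {φ : P →* Q}
    (hφ : Function.Surjective φ) (e : FreeGroup (Fin k) ≃* φ.ker) :
    IsStronglyPolyFree P (n + 1) := by
  obtain ⟨G, hbot, htop, hnormal, hle, hfree⟩ := hQ
  have hker : (G 0).comap φ = φ.ker := by rw [hbot, MonoidHom.comap_bot]
  refine ⟨Fin.cases ⊥ fun i => (G i).comap φ, rfl, ?_, ?_, ?_, ?_⟩
  · exact (congrArg (Subgroup.comap φ) htop).trans (Subgroup.comap_top φ)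
  · exact Fin.cases (inferInstanceAs (⊥ : Subgroup P).Normal) fun i => (hnormal i).comap φ
  · exact Fin.cases bot_le fun i => Subgroup.comap_mono (hle i)
  · refine Fin.cases ?_ fun i => (hfree i).comap hφ
    exact hasFGFreeQuotient_bot (e.trans (MulEquiv.subgroupCongr hker.symm))

theorem IsStronglyPolyFree.of_mulEquiv {n : ℕ} (hQ : IsStronglyPolyFree Q n) (e : P ≃* Q) :
    IsStronglyPolyFree P n := by
  obtain ⟨G, hbot, htop, hnormal, hle, hfree⟩ := hQ
  have hker : (⊥ : Subgroup Q).comap e.toMonoidHom = ⊥ := by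
    rw [MonoidHom.comap_bot, (MonoidHom.ker_eq_bot_iff _).2 e.injective]
  exact ⟨fun i => (G i).comap e.toMonoidHom, (congrArg _ hbot).trans hker,
    (congrArg _ htop).trans (Subgroup.comap_top _), fun i => (hnormal i).comap _,
    fun i => Subgroup.comap_mono (hle i), fun i => (hfree i).comap e.surjective⟩

end PolyFree

section Transport

/-- There is a continuous family over `A` of injective maps of `V` that move the configurations
`g a` to `g' a` and are the identity for `a ∈ C`. -/
def TransportsTo {V ι A : Type*} [TopologicalSpace V] [TopologicalSpace A] (C : Set A)
    (g g' : A → ι → V) : Prop :=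
  ∃ T : A → V → V, Continuous (Function.uncurry T) ∧ (∀ a, Function.Injective (T a)) ∧
    (∀ a i, T a (g a i) = g' a i) ∧ ∀ a ∈ C, T a = id

theorem TransportsTo.trans {V ι A : Type*} [TopologicalSpace V] [TopologicalSpace A] {C : Set A}
    {g g' g'' : A → ι → V} :
    TransportsTo C g g' → TransportsTo C g' g'' → TransportsTo C g g'' := by
  rintro ⟨T, hT, hinj, hTg, hC⟩ ⟨T', hT', hinj', hTg', hC'⟩
  refine ⟨fun a => T' a ∘ T a, hT'.comp (continuous_fst.prodMk hT),
    fun a => (hinj' a).comp (hinj a), fun a i => ?_, fun a ha => ?_⟩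
  · simp only [Function.comp_apply, hTg, hTg']
  · simp only [hC a ha, hC' a ha, Function.id_comp]

theorem exists_pos_le_norm_sub {V ι A : Type*} [NormedAddCommGroup V] [Finite ι]
    [TopologicalSpace A] [CompactSpace A] {g : A → ι → V} (hg : Continuous g)
    (hinj : ∀ a, Function.Injective (g a)) :
    ∃ r > 0, ∀ a i j, i ≠ j → r ≤ ‖g a i - g a j‖ := by
  have hsep : ∀ᶠ r in 𝓝[>] (0 : ℝ), ∀ i j, i ≠ j → ∀ a, r ≤ ‖g a i - g a j‖ := by
    refine Filter.eventually_all.2 fun i => Filter.eventually_all.2 fun j =>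
      Filter.eventually_imp_distrib_left.2 fun hij => ?_
    have hcont : Continuous fun a => ‖g a i - g a j‖ := by fun_prop
    obtain ⟨s, hs, hle⟩ := isCompact_univ.exists_forall_le' hcont.continuousOn (a := 0)
      fun a _ => norm_sub_pos_iff.2 ((hinj a).ne hij)
    filter_upwards [Ioc_mem_nhdsGT hs] with r hr a
    exact hr.2.trans (hle a trivial)
  obtain ⟨r, hsep, hr⟩ := (hsep.and self_mem_nhdsWithin).exists
  exact ⟨r, hr, fun a i j hij => hsep i j hij a⟩

theorem abs_damping_sub_le {V : Type*} [SeminormedAddCommGroup V] {r : ℝ} (hr : 0 < r) (b z w : V) :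
    |max 0 (1 - ‖w - b‖ / r) - max 0 (1 - ‖z - b‖ / r)| ≤ ‖z - w‖ / r :=
  calc |max 0 (1 - ‖w - b‖ / r) - max 0 (1 - ‖z - b‖ / r)|
    _ ≤ |(1 - ‖w - b‖ / r) - (1 - ‖z - b‖ / r)| := by
      simpa only [max_comm] using abs_max_sub_max_le_abs (1 - ‖w - b‖ / r) (1 - ‖z - b‖ / r) 0
    _ = |‖z - b‖ - ‖w - b‖| / r := by
      rw [sub_sub_sub_cancel_left, ← sub_div, abs_div, abs_of_pos hr]
    _ ≤ ‖z - w‖ / r := by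
      gcongr
      simpa using abs_norm_sub_norm_le (z - b) (w - b)

variable {V ι A : Type*} [NormedAddCommGroup V] [NormedSpace ℝ V] [TopologicalSpace A]

section Push

variable [Fintype ι]

/-- The map of `V` that translates by `b' i - b i` near each `b i`, damped linearly with the
distance to `b i` and reaching `0` at distance `r`. -/
noncomputable def push (r : ℝ) (b b' : ι → V) (z : V) : V :=
  z + ∑ i, max 0 (1 - ‖z - b i‖ / r) • (b' i - b i)

theorem push_self (r : ℝ) (b : ι → V) (z : V) : push r b b z = z := by
  simp [push]

theorem push_apply {r : ℝ} (hr : 0 < r) {b : ι → V} (hb : ∀ i j, i ≠ j → r ≤ ‖b i - b j‖)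
    (b' : ι → V) (i : ι) : push r b b' (b i) = b' i := by
  have hfar (j : ι) (hj : j ≠ i) : max 0 (1 - ‖b i - b j‖ / r) = 0 :=
    max_eq_left <| sub_nonpos.2 <| (one_le_div hr).2 <| hb i j hj.symm
  rw [push, Finset.sum_eq_single i (fun j _ hj => by rw [hfar j hj, zero_smul]) (by simp)]
  simp

theorem push_injective {r : ℝ} (hr : 0 < r) {b b' : ι → V}
    (hb : ∀ i, ‖b' i - b i‖ * (Fintype.card ι + 1) < r) : Function.Injective (push r b b') := by
  intro z w hzw
  by_contra hne
  have hpos : 0 < ‖z - w‖ := norm_sub_pos_iff.2 hne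
  have hsub : z - w =
      ∑ i, (max 0 (1 - ‖w - b i‖ / r) - max 0 (1 - ‖z - b i‖ / r)) • (b' i - b i) := by
    simp only [sub_smul, Finset.sum_sub_distrib]
    rw [push, push] at hzw
    rw [sub_eq_sub_iff_add_eq_add, hzw, add_comm]
  have hterm (i : ι) : ‖(max 0 (1 - ‖w - b i‖ / r) - max 0 (1 - ‖z - b i‖ / r)) • (b' i - b i)‖ ≤
      ‖z - w‖ / (Fintype.card ι + 1) :=
    calc _ ≤ ‖z - w‖ / r * (r / (Fintype.card ι + 1)) := by
          rw [norm_smul, Real.norm_eq_abs]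
          gcongr
          · exact abs_damping_sub_le hr _ _ _
          · exact ((lt_div_iff₀ (by positivity)).2 (hb i)).le
      _ = ‖z - w‖ / (Fintype.card ι + 1) := by field_simp
  have hle : ‖z - w‖ ≤ Fintype.card ι * (‖z - w‖ / (Fintype.card ι + 1)) :=
    calc ‖z - w‖ = _ := congrArg norm hsub
      _ ≤ _ := norm_sum_le_of_le _ fun i _ => hterm i
      _ = _ := by simp
  rw [mul_div_assoc', le_div_iff₀ (by positivity)] at hle
  linarith

theorem transportsTo_of_norm_sub_lt {C : Set A} {g g' : A → ι → V} (hg : Continuous g)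
    (hg' : Continuous g') {r : ℝ} (hr : 0 < r) (hsep : ∀ a i j, i ≠ j → r ≤ ‖g a i - g a j‖)
    (hlt : ∀ a i, ‖g' a i - g a i‖ * (Fintype.card ι + 1) < r) (hC : ∀ a ∈ C, g a = g' a) :
    TransportsTo C g g' := by
  refine ⟨fun a => push r (g a) (g' a), ?_, fun a => push_injective hr (hlt a),
    fun a => push_apply hr (hsep a) _, fun a ha => funext fun z => ?_⟩
  · unfold push
    fun_prop
  · simp only [← hC a ha, push_self, id]

end Push

theorem exists_transport [Finite ι] [CompactSpace A] (G : C(A × I, ι → V))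
    (hinj : ∀ q, Function.Injective (G q)) :
    TransportsTo {a | ∀ t, G (a, t) = G (a, 0)} (fun a => G (a, 0)) fun a => G (a, 1) := by
  have := Fintype.ofFinite ι
  obtain ⟨r, hr, hsep⟩ := exists_pos_le_norm_sub G.continuous hinj
  have hcont (t : I) : Continuous fun a => G (a, t) := by fun_prop
  refine PreconnectedSpace.induction₂' (fun s t : I => TransportsTo {a | ∀ t, G (a, t) = G (a, 0)}
    (fun a => G (a, s)) fun a => G (a, t)) (fun s => ?_) ⟨fun _ _ _ => .trans⟩ 0 1
  have hnear : ∀ᶠ t in 𝓝 s, ∀ a ∈ (Set.univ : Set A), ∀ i,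
      ‖G (a, t) i - G (a, s) i‖ * (Fintype.card ι + 1) < r := by
    refine isCompact_univ.eventually_forall_of_forall_eventually fun a _ =>
      Filter.eventually_all.2 fun i => ?_
    have : Continuous fun q : I × A =>
      ‖G (q.2, q.1) i - G (q.2, s) i‖ * (Fintype.card ι + 1) := by fun_prop
    exact this.continuousAt.eventually_lt_const (by simpa using hr)
  filter_upwards [hnear] with t ht
  constructor
  · exact transportsTo_of_norm_sub_lt (hcont s) (hcont t) hr (fun a => hsep _)
      (fun a => ht a trivial) fun a ha => (ha s).trans (ha t).symm
  · exact transportsTo_of_norm_sub_lt (hcont t) (hcont s) hr (fun a => hsep _)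
      (fun a i => by simpa only [norm_sub_rev] using ht a trivial i)
      fun a ha => (ha t).trans (ha s).symm

end Transport

section Fibration

variable {E B : Type*} [TopologicalSpace E] [TopologicalSpace B] {p : C(E, B)}

/-- Hurewicz's regular path lifting in families over compact spaces: every family `G` of paths in
`B` induces maps between the fibres of `p` over its end points, and these are the identity for
constant paths. -/
def HasRegularTransport (p : C(E, B)) : Prop :=
  ∀ (A : Type) [TopologicalSpace A] [CompactSpace A] (G : C(A × I, B)),
    ∃ T : C({q : A × E // p q.2 = G (q.1, 0)}, E), (∀ q, p (T q) = G (q.1.1, 1)) ∧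
      ∀ q, (∀ t, G (q.1.1, t) = G (q.1.1, 0)) → T q = q.1.2

/-- The inclusion of the fibre of `p` over `b`. -/
def fibreIncl (p : C(E, B)) (b : B) : C(p ⁻¹' {b}, E) := ⟨Subtype.val, continuous_subtype_val⟩

/-- The point `e₀` in the fibre of `p` through it. -/
abbrev fibrePt (p : C(E, B)) (e₀ : E) : p ⁻¹' {p e₀} := ⟨e₀, rfl⟩

theorem homotopic_of_square {X : Type*} [TopologicalSpace X] {x y : X} {γ δ : Path x y}
    (K : C(I × I, X)) (h₀ : ∀ u, K (0, u) = γ u) (h₁ : ∀ u, K (1, u) = δ u)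
    (hx : ∀ v, K (v, 0) = x) (hy : ∀ v, K (v, 1) = y) : γ.Homotopic δ :=
  ⟨{ K with
     map_zero_left := h₀
     map_one_left := h₁
     prop' := by
      rintro v _ (rfl | rfl)
      exacts [(hx v).trans γ.source.symm, (hy v).trans γ.target.symm] }⟩

variable {e₀ : E}

theorem HasRegularTransport.exists_lift (hp : HasRegularTransport p) {A : Type}
    [TopologicalSpace A] [CompactSpace A] (G : C(A × I, B)) (f : C(A, E))
    (hf : ∀ a, p (f a) = G (a, 0)) :
    ∃ g : C(A, E), (∀ a, p (g a) = G (a, 1)) ∧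
      ∀ a, (∀ t, G (a, t) = G (a, 0)) → g a = f a := by
  obtain ⟨T, hT, hstat⟩ := hp A G
  exact ⟨⟨fun a => T ⟨(a, f a), hf a⟩, by fun_prop⟩, fun a => hT ⟨(a, f a), hf a⟩,
    fun a => hstat ⟨(a, f a), hf a⟩⟩

theorem HasRegularTransport.exists_fibre_loop (hp : HasRegularTransport p) (γ : Path e₀ e₀)
    (hγ : (γ.map p.continuous).Homotopic (Path.refl (p e₀))) :
    ∃ α : Path (fibrePt p e₀) (fibrePt p e₀),
      γ.Homotopic (α.map (fibreIncl p (p e₀)).continuous) := by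
  obtain ⟨H⟩ := hγ
  let G : C((I × I) × I, B) := ⟨fun q => H (q.1.1 * q.2, q.1.2), by fun_prop⟩
  obtain ⟨K, hK, hstat⟩ := hp.exists_lift G (⟨fun a => γ a.2, by fun_prop⟩ : C(I × I, E))
    fun a => by simp [G]
  have hK₀ (v : I) : K (v, 0) = e₀ := by simpa using hstat (v, 0) (by simp [G])
  have hK₁ (v : I) : K (v, 1) = e₀ := by simpa using hstat (v, 1) (by simp [G])
  let α : Path (fibrePt p e₀) (fibrePt p e₀) :=
    { toFun u := ⟨K (1, u), by simp [hK, G]⟩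
      source' := Subtype.ext (hK₀ 1)
      target' := Subtype.ext (hK₁ 1) }
  exact ⟨α, homotopic_of_square K (fun u => hstat (0, u) (by simp [G])) (fun _ => rfl) hK₀ hK₁⟩

/-- Both loops are homotopic in the fibre to the loop obtained from `ε` by transport along
`v ↦ p (H (v, u))`. -/
theorem HasRegularTransport.homotopic_of_map_homotopy_eq (hp : HasRegularTransport p)
    {α β : Path (fibrePt p e₀) (fibrePt p e₀)} {ε : Path e₀ e₀}
    (H : (α.map (fibreIncl p (p e₀)).continuous).Homotopy ε)
    (H' : (β.map (fibreIncl p (p e₀)).continuous).Homotopy ε)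
    (hHH' : ∀ q, p (H' q) = p (H q)) : α.Homotopic β := by
  let G : C((I × I) × I, B) := ⟨fun q => p (H (q.1.1 * σ q.2, q.1.2)), by fun_prop⟩
  obtain ⟨T, hT, hstat⟩ := hp (I × I) G
  have hend (q : I × I) : G (q, 1) = p e₀ := by
    simpa [G] using (congrArg p (H.apply_zero q.2)).trans (α q.2).2
  have hstat₀ (v t : I) : G ((v, 0), t) = G ((v, 0), 0) := by
    simp only [G, ContinuousMap.coe_mk, H.source]
  have hstat₁ (v t : I) : G ((v, 1), t) = G ((v, 1), 0) := by
    simp only [G, ContinuousMap.coe_mk, H.target]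
  have hε (u : I) : p (ε u) = G ((1, u), 0) := by simp [G]
  let τ : Path (fibrePt p e₀) (fibrePt p e₀) :=
    { toFun u := ⟨T ⟨((1, u), ε u), hε u⟩, (hT _).trans (hend _)⟩
      source' := Subtype.ext ((hstat _ (hstat₀ 1)).trans ε.source)
      target' := Subtype.ext ((hstat _ (hstat₁ 1)).trans ε.target) }
  have homotopic_transport {δ : Path (fibrePt p e₀) (fibrePt p e₀)}
      (L : (δ.map (fibreIncl p (p e₀)).continuous).Homotopy ε) (hL : ∀ q, p (L q) = p (H q)) :
      δ.Homotopic τ := by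
    have hstart (q : I × I) : p (L q) = G (q, 0) := by simp [G, hL]
    let K : C(I × I, p ⁻¹' {p e₀}) :=
      ⟨fun q => ⟨T ⟨(q, L q), hstart q⟩, (hT _).trans (hend _)⟩, by fun_prop⟩
    refine homotopic_of_square K (fun u => Subtype.ext ?_) (fun u => Subtype.ext ?_)
      (fun v => Subtype.ext ?_) (fun v => Subtype.ext ?_)
    · exact (hstat _ (by simp [G])).trans (L.apply_zero u)
    · simp [K, τ]
    · exact (hstat _ (hstat₀ v)).trans (L.source v)
    · exact (hstat _ (hstat₁ v)).trans (L.target v)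
  exact (homotopic_transport H fun _ => rfl).trans (homotopic_transport H' hHH').symm

variable (p e₀)

/-- The homomorphism from the fundamental group of the fibre of `p` through `e₀`. -/
noncomputable abbrev fibreHom :
    FundamentalGroup (p ⁻¹' {p e₀}) (fibrePt p e₀) →* FundamentalGroup E e₀ :=
  FundamentalGroup.map (fibreIncl p (p e₀)) (fibrePt p e₀)

variable {p e₀}

theorem HasRegularTransport.range_fibreHom (hp : HasRegularTransport p) :
    (fibreHom p e₀).range = (FundamentalGroup.map p e₀).ker := by
  ext g
  constructor
  · rintro ⟨α, rfl⟩
    induction α using Path.Homotopic.Quotient.ind with | mk α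
    refine congrArg Path.Homotopic.Quotient.mk (?_ : _ = Path.refl (p e₀))
    ext u
    exact (α u).2
  · intro hg
    induction g using Path.Homotopic.Quotient.ind with | mk γ
    obtain ⟨α, hα⟩ := hp.exists_fibre_loop γ (Path.Homotopic.Quotient.exact hg)
    exact ⟨.mk α, (Path.Homotopic.Quotient.eq.2 hα).symm⟩

theorem HasRegularTransport.fibreHom_injective (hp : HasRegularTransport p) (s : C(B, E))
    (hs : ∀ b, p (s b) = b) (he₀ : s (p e₀) = e₀) : Function.Injective (fibreHom p e₀) := by
  refine (injective_iff_map_eq_one _).2 fun g hg => ?_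
  induction g using Path.Homotopic.Quotient.ind with | mk α
  obtain ⟨H⟩ : (α.map (fibreIncl p (p e₀)).continuous).Homotopic (Path.refl e₀) :=
    Path.Homotopic.Quotient.exact hg
  let H' : ((Path.refl (fibrePt p e₀)).map (fibreIncl p (p e₀)).continuous).Homotopy
      (Path.refl e₀) :=
    { toFun q := s (p (H q))
      map_zero_left u := by
        have hα : p (H (0, u)) = p e₀ := (congrArg p (H.apply_zero u)).trans (α u).2
        exact (congrArg s hα).trans he₀
      map_one_left u := by simpa using he₀
      prop' := by
        rintro v _ (rfl | rfl)
        exacts [(congrArg (s ∘ p) (H.source v)).trans he₀,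
          (congrArg (s ∘ p) (H.target v)).trans he₀] }
  exact Path.Homotopic.Quotient.eq.2 (hp.homotopic_of_map_homotopy_eq H H' fun q => hs _)

theorem map_surjective_of_section (s : C(B, E)) (hs : ∀ b, p (s b) = b) (he₀ : s (p e₀) = e₀) :
    Function.Surjective (FundamentalGroup.map p e₀) := by
  intro g
  induction g using Path.Homotopic.Quotient.ind with | mk γ
  refine ⟨.mk ((γ.map s.continuous).cast he₀.symm he₀.symm), congrArg Path.Homotopic.Quotient.mk ?_⟩
  ext t
  exact hs _

theorem HasRegularTransport.isStronglyPolyFree_succ (hp : HasRegularTransport p) (s : C(B, E))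
    (hs : ∀ b, p (s b) = b) (hconn : ∀ b, IsPathConnected (p ⁻¹' {b})) {k n : ℕ}
    (hfree : ∀ b (y : p ⁻¹' {b}), Nonempty (FreeGroup (Fin k) ≃* FundamentalGroup _ y))
    (hB : ∀ b, IsStronglyPolyFree (FundamentalGroup B b) n) (e : E) :
    IsStronglyPolyFree (FundamentalGroup E e) (n + 1) := by
  obtain ⟨γ, -⟩ := (hconn (p e)).joinedIn e rfl (s (p e)) (hs _)
  refine .of_mulEquiv ?_ (FundamentalGroup.fundamentalGroupMulEquivOfPath γ)
  generalize he₀ : s (p e) = e₀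
  have hse₀ : s (p e₀) = e₀ := by rw [← he₀, hs]
  obtain ⟨φ⟩ := hfree (p e₀) (fibrePt p e₀)
  exact (hB (p e₀)).of_surjective (map_surjective_of_section s hs hse₀) <|
    φ.trans <| (MonoidHom.ofInjective (hp.fibreHom_injective s hs hse₀)).trans <|
      MulEquiv.subgroupCongr hp.range_fibreHom

end Fibration

section ConfigurationSpace

/-- The ordered configuration space of `n` points in `V`. -/
abbrev Conf (n : ℕ) (V : Type*) := {f : Fin n → V // Function.Injective f}

namespace Conf

variable {n : ℕ} {V : Type*} [TopologicalSpace V]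

theorem continuous_eval (i : Fin n) : Continuous fun f : Conf n V => f.1 i :=
  (continuous_apply i).comp continuous_subtype_val

/-- The projection `Conf (n + 1) V → Conf n V` forgetting the first point. -/
def tail : C(Conf (n + 1) V, Conf n V) where
  toFun f := ⟨Fin.tail f.1, f.2.comp (Fin.succ_injective n)⟩
  continuous_toFun := continuous_induced_rng.2 (continuous_pi fun i => continuous_eval i.succ)

/-- The configuration `b` with the point `z` put in front. -/
def cons (b : Conf n V) (z : ↥(Set.range b.1)ᶜ) : Conf (n + 1) V :=
  ⟨Fin.cons z b.1, Fin.cons_injective_iff.2 ⟨z.2, b.2⟩⟩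

theorem tail_cons (b : Conf n V) (z : ↥(Set.range b.1)ᶜ) : tail (cons b z) = b := rfl

/-- The fibre of `tail` over `b` is the complement of `b`. -/
def fibreHomeomorph (b : Conf n V) : tail ⁻¹' {b} ≃ₜ ↥(Set.range b.1)ᶜ where
  toFun f := ⟨f.1.1 0, fun ⟨i, hi⟩ => Fin.succ_ne_zero i <| f.1.2 <|
    (congrArg (fun c : Conf n V => c.1 i) f.2 : f.1.1 i.succ = b.1 i).trans hi⟩
  invFun z := ⟨cons b z, tail_cons b z⟩
  left_inv := by
    rintro ⟨f, rfl⟩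
    exact Subtype.ext (Subtype.ext (Fin.cons_self_tail f.1))
  right_inv z := rfl
  continuous_toFun := ((continuous_eval 0).comp continuous_subtype_val).subtype_mk _
  continuous_invFun := by
    refine Continuous.subtype_mk (Continuous.subtype_mk ?_ _) _
    exact Continuous.finCons continuous_subtype_val continuous_const

theorem hasRegularTransport_tail {V : Type*} [NormedAddCommGroup V] [NormedSpace ℝ V] :
    HasRegularTransport (tail : C(Conf (n + 1) V, Conf n V)) := by
  intro A _ _ G
  obtain ⟨T, hT, hinj, hTG, hstat⟩ :=
    exists_transport (⟨fun q => (G q).1, by fun_prop⟩ : C(A × I, Fin n → V)) fun q => (G q).2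
  refine ⟨⟨fun q => ⟨T q.1.1 ∘ q.1.2.1, (hinj _).comp q.1.2.2⟩, ?_⟩, fun q => ?_, fun q hq => ?_⟩
  · refine Continuous.subtype_mk (continuous_pi fun i => ?_) _
    exact hT.comp (f := fun q : {q : A × Conf (n + 1) V // tail q.2 = G (q.1, 0)} =>
      (q.1.1, q.1.2.1 i)) (continuous_subtype_val.fst.prodMk
        ((continuous_eval i).comp continuous_subtype_val.snd))
  · refine Subtype.ext (funext fun i => ?_)
    rw [← show T q.1.1 ((G (q.1.1, 0)).1 i) = (G (q.1.1, 1)).1 i from hTG _ i, ← q.2]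
    rfl
  · refine Subtype.ext ?_
    change T q.1.1 ∘ q.1.2.1 = q.1.2.1
    rw [hstat q.1.1 fun t => congrArg Subtype.val (hq t), Function.id_comp]

theorem exists_section_tail {V : Type*} [NormedAddCommGroup V] [NormedSpace ℝ V] [Nontrivial V] :
    ∃ s : C(Conf n V, Conf (n + 1) V), ∀ b, tail (s b) = b := by
  obtain ⟨v, hv⟩ := exists_norm_eq V zero_le_one
  have hfar (b : Conf n V) : (1 + ∑ i, ‖b.1 i‖) • v ∈ (Set.range b.1)ᶜ := by
    rintro ⟨i, hi⟩
    have hnorm : ‖b.1 i‖ = 1 + ∑ i, ‖b.1 i‖ := by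
      rw [hi, norm_smul, hv, mul_one, Real.norm_of_nonneg (by positivity)]
    have := Finset.single_le_sum (fun j _ => norm_nonneg (b.1 j)) (Finset.mem_univ i)
    linarith
  refine ⟨⟨fun b => cons b ⟨_, hfar b⟩, ?_⟩, fun b => tail_cons b _⟩
  exact Continuous.subtype_mk (Continuous.finCons
    (.smul (continuous_const.add (continuous_finsetSum _ fun i _ => (continuous_eval i).norm))
      continuous_const) continuous_subtype_val) _

end Conf

end ConfigurationSpace

section VanKampen

variable {X : Type*} [TopologicalSpace X] {x y z : X} {U V : Set X}

/-- The homotopy classes in `X` of the paths from `x` to `y` that run inside `U`. -/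
def classesIn (U : Set X) (x y : X) : Set (Path.Homotopic.Quotient x y) :=
  {c | ∃ γ : Path x y, Set.range γ ⊆ U ∧ .mk γ = c}

theorem classesIn_mono (h : U ⊆ V) : classesIn U x y ⊆ classesIn V x y :=
  fun _ ⟨γ, hγ, hc⟩ => ⟨γ, hγ.trans h, hc⟩

theorem mem_of_mem_classesIn {c : Path.Homotopic.Quotient x y}
    (hc : c ∈ classesIn U x y) : x ∈ U ∧ y ∈ U := by
  obtain ⟨γ, hγ, -⟩ := hc
  exact ⟨hγ ⟨0, γ.source⟩, hγ ⟨1, γ.target⟩⟩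

theorem refl_mem_classesIn (hx : x ∈ U) : .refl x ∈ classesIn U x x :=
  ⟨.refl x, by simpa, rfl⟩

theorem trans_mem_classesIn {c : Path.Homotopic.Quotient x y} {d : Path.Homotopic.Quotient y z}
    (hc : c ∈ classesIn U x y) (hd : d ∈ classesIn U y z) : c.trans d ∈ classesIn U x z := by
  obtain ⟨γ, hγ, rfl⟩ := hc
  obtain ⟨δ, hδ, rfl⟩ := hd
  exact ⟨γ.trans δ, by rw [Path.trans_range]; exact Set.union_subset hγ hδ, rfl⟩

theorem symm_mem_classesIn {c : Path.Homotopic.Quotient x y} (hc : c ∈ classesIn U x y) :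
    c.symm ∈ classesIn U y x := by
  obtain ⟨γ, hγ, rfl⟩ := hc
  exact ⟨γ.symm, by rwa [Path.symm_range], rfl⟩

theorem nonempty_classesIn (hU : IsPathConnected U) (hx : x ∈ U) (hy : y ∈ U) :
    (classesIn U x y).Nonempty := by
  obtain ⟨γ, hγ⟩ := hU.joinedIn x hx y hy
  exact ⟨.mk γ, γ, Set.range_subset_iff.2 hγ, rfl⟩

theorem subsingleton_classesIn (hU : IsSimplyConnected U) : (classesIn U x y).Subsingleton := by
  rintro _ ⟨γ, hγ, rfl⟩ _ ⟨δ, hδ, rfl⟩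
  have := hU.simplyConnectedSpace
  obtain ⟨hx, hy⟩ := mem_of_mem_classesIn ⟨γ, hγ, rfl⟩
  rw [Set.range_subset_iff] at hγ hδ
  let γU : Path (⟨x, hx⟩ : U) ⟨y, hy⟩ := ⟨⟨fun t => ⟨γ t, hγ t⟩, by fun_prop⟩, by simp, by simp⟩
  let δU : Path (⟨x, hx⟩ : U) ⟨y, hy⟩ := ⟨⟨fun t => ⟨δ t, hδ t⟩, by fun_prop⟩, by simp, by simp⟩
  exact Path.Homotopic.Quotient.eq.2 <|
    (SimplyConnectedSpace.paths_homotopic γU δU).map ⟨_, continuous_subtype_val⟩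

theorem quotient_induction_of_cover {ι : Type*} {c : ι → Set X} (hc : ∀ i, IsOpen (c i))
    (hcover : ⋃ i, c i = Set.univ) {P : ∀ ⦃x y : X⦄, Path.Homotopic.Quotient x y → Prop}
    (mem : ∀ i x y, ∀ a ∈ classesIn (c i) x y, P a)
    (trans : ∀ x y z (a : Path.Homotopic.Quotient x y) (b : Path.Homotopic.Quotient y z),
      P a → P b → P (a.trans b))
    (a : Path.Homotopic.Quotient x y) : P a := by
  induction a using Path.Homotopic.Quotient.ind with | mk γ
  have of_cast {x' y' : X} (hx : x' = x) (hy : y' = y) (h : P (.mk (γ.cast hx hy))) :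
      P (.mk γ) := by
    subst hx hy
    exact h
  suffices P (.mk (γ.subpath 0 1)) from of_cast γ.source γ.target (γ.subpath_zero_one ▸ this)
  refine PreconnectedSpace.induction₂' (fun s t : I => P (.mk (γ.subpath s t))) (fun s => ?_)
    ⟨fun r s t hrs hst => ?_⟩ 0 1
  · obtain ⟨i, hi⟩ := Set.mem_iUnion.1 (hcover ▸ Set.mem_univ (γ s))
    have hnhds : γ ⁻¹' c i ∈ 𝓝 s := γ.continuous.continuousAt ((hc i).mem_nhds hi)
    have huIcc : ∀ᶠ t in 𝓝 s, Set.uIcc s t ⊆ γ ⁻¹' c i :=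
      (tendsto_const_nhds.uIcc Filter.tendsto_id).eventually
        (Filter.eventually_smallSets_subset.2 hnhds)
    filter_upwards [huIcc] with t ht
    constructor
    · exact mem i _ _ _ ⟨_, by rwa [Path.range_subpath, Set.image_subset_iff], rfl⟩
    · exact mem i _ _ _ ⟨_, by rwa [Path.range_subpath, Set.image_subset_iff, Set.uIcc_comm], rfl⟩
  · have := trans _ _ _ _ _ hrs hst
    rwa [← Path.Homotopic.Quotient.mk_trans,
      Path.Homotopic.Quotient.eq.2 ⟨Path.Homotopy.subpathTransSubpath γ r s t⟩] at this

section Monodromy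

/-- The point with coordinate `v` over `x` in the chart `i` of the bundle `Z`. -/
def chartPoint {ι F : Type*} [TopologicalSpace F] (Z : FiberBundleCore ι X F) (i : ι) (x : X)
    (v : F) : Z.proj ⁻¹' {x} :=
  ⟨⟨x, Z.coordChange i (Z.indexAt x) x v⟩, rfl⟩

theorem monodromy_chartPoint {ι F : Type*} [TopologicalSpace F] {Z : FiberBundleCore ι X F}
    (hZ : IsCoveringMap Z.proj) (i : ι) {a : Path.Homotopic.Quotient x y}
    (ha : a ∈ classesIn (Z.baseSet i) x y) (v : F) :
    hZ.monodromy a (chartPoint Z i x v) = chartPoint Z i y v := by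
  obtain ⟨γ, hγ, rfl⟩ := ha
  let Γ : Path (chartPoint Z i x v).1 (chartPoint Z i y v).1 :=
    { toFun t := (chartPoint Z i (γ t) v).1
      continuous_toFun := by
        refine (Z.localTriv i).toOpenPartialHomeomorph.continuousOn_symm.comp_continuous
          (by fun_prop : Continuous fun t => (γ t, v)) fun t => ?_
        exact (Z.mem_localTriv_target i _).2 (hγ (Set.mem_range_self t))
      source' := by rw [γ.source]
      target' := by rw [γ.target] }
  exact hZ.monodromy_eq_of_map_eq (.mk Γ) (congrArg Path.Homotopic.Quotient.mk rfl)

variable {G : Type*} [Group G] [TopologicalSpace G] [DiscreteTopology G]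

open Classical in
/-- The bundle over `X = U ∪ V` with fibre `G` glued from `U × G` (chart `true`) and `V × G` (chart
`false`) by left multiplication with the locally constant function `k` on `U ∩ V`. -/
noncomputable def gluedBundle (hU : IsOpen U) (hV : IsOpen V) (hUV : U ∪ V = Set.univ)
    {k : X → G} (hk : ContinuousOn k (U ∩ V)) : FiberBundleCore Bool X G where
  baseSet i := if i then U else V
  isOpen_baseSet i := by cases i <;> simpa
  indexAt x := decide (x ∈ U)
  mem_baseSet_at x := by
    have hx : x ∈ U ∪ V := hUV ▸ Set.mem_univ x
    by_cases h : x ∈ U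
    · simp [h]
    · simpa [h] using hx
  coordChange
    | true, false, x, v => k x * v
    | false, true, x, v => (k x)⁻¹ * v
    | _, _, _, v => v
  coordChange_self i x _ v := by cases i <;> rfl
  continuousOn_coordChange i j := by
    have hkU : ContinuousOn (fun q : X × G => k q.1) ((U ∩ V) ×ˢ Set.univ) :=
      hk.comp continuousOn_fst fun q hq => hq.1
    have hkV : ContinuousOn (fun q : X × G => k q.1) ((V ∩ U) ×ˢ Set.univ) :=
      Set.inter_comm U V ▸ hkU
    rcases i, j with ⟨_ | _, _ | _⟩
    · exact continuousOn_snd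
    · exact hkV.inv.mul continuousOn_snd
    · exact hkU.mul continuousOn_snd
    · exact continuousOn_snd
  coordChange_comp i j l x _ v := by cases i <;> cases j <;> cases l <;> simp

theorem chartPoint_true (hU : IsOpen U) (hV : IsOpen V) (hUV : U ∪ V = Set.univ)
    {k : X → G} (hk : ContinuousOn k (U ∩ V)) (x : X) (v : G) :
    chartPoint (gluedBundle hU hV hUV hk) true x v =
      chartPoint (gluedBundle hU hV hUV hk) false x (k x * v) := by
  by_cases hx : x ∈ U <;> simp [chartPoint, gluedBundle, hx]

theorem exists_monodromy_of_cover (hU : IsOpen U) (hV : IsOpen V) (hUV : U ∪ V = Set.univ)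
    {k : X → G} (hk : ContinuousOn k (U ∩ V)) {x₀ : X} (hk₀ : k x₀ = 1) :
    ∃ ρ : FundamentalGroup X x₀ →* Equiv.Perm G, ∀ z, ∀ a ∈ classesIn U x₀ z,
      ∀ b ∈ classesIn V x₀ z, ρ (a.trans b.symm) = MulAction.toPerm (k z) := by
  let Z := gluedBundle hU hV hUV hk
  have hZ : IsCoveringMap Z.proj := FiberBundle.isCoveringMap (F := G) (E := Z.Fiber)
  have chartPoint_base (i : Bool) (v : G) : chartPoint Z i x₀ v = ⟨⟨x₀, v⟩, rfl⟩ := by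
    by_cases hx : x₀ ∈ U <;> cases i <;> simp [Z, chartPoint, gluedBundle, hx, hk₀]
  have hbij : Function.Bijective (chartPoint Z true x₀) := by
    constructor
    · intro v w h
      rw [chartPoint_base, chartPoint_base] at h
      exact eq_of_heq (Bundle.TotalSpace.mk.inj (congrArg Subtype.val h)).2
    · rintro ⟨⟨_, v⟩, rfl⟩
      exact ⟨v, chartPoint_base true v⟩
  let e : G ≃ Z.proj ⁻¹' {x₀} := .ofBijective _ hbij
  refine ⟨e.symm.permCongrHom.toMonoidHom.comp (hZ.monodromyPerm x₀), fun z a ha b hb => ?_⟩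
  ext v
  change e.symm (hZ.monodromy (a.trans b.symm) (chartPoint Z true x₀ v)) = k z * v
  rw [Equiv.symm_apply_eq, hZ.monodromy_trans_apply, monodromy_chartPoint hZ true ha,
    chartPoint_true, monodromy_chartPoint hZ false (symm_mem_classesIn hb), chartPoint_base]
  exact (chartPoint_base true _).symm

end Monodromy

end VanKampen

section FreeCover

variable {X ι : Type*} [TopologicalSpace X] {x₀ : X}

theorem trans_symm_trans_trans_trans {v w x y z : X} (p : Path.Homotopic.Quotient v w)
    (m : Path.Homotopic.Quotient x w) (q : Path.Homotopic.Quotient w y)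
    (r : Path.Homotopic.Quotient y z) :
    (p.trans m.symm).trans ((m.trans q).trans r) = (p.trans q).trans r := by
  simp only [Path.Homotopic.Quotient.trans_assoc]
  rw [← Path.Homotopic.Quotient.trans_assoc m.symm, Path.Homotopic.Quotient.symm_trans,
    Path.Homotopic.Quotient.refl_trans]

theorem symm_trans_symm {x y z : X} (a : Path.Homotopic.Quotient x y)
    (b : Path.Homotopic.Quotient z y) : (a.trans b.symm).symm = b.trans a.symm := by
  induction a using Path.Homotopic.Quotient.ind with | mk α
  induction b using Path.Homotopic.Quotient.ind with | mk β
  exact congrArg Path.Homotopic.Quotient.mk (by rw [Path.trans_symm, Path.symm_symm])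

theorem subgroup_eq_top_of_cover {c : ι → Set X} (hc : ∀ i, IsOpen (c i))
    (hcover : ⋃ i, c i = Set.univ) (hconn : ∀ i, IsPathConnected (c i)) (hx₀ : ∀ i, x₀ ∈ c i)
    {H : Subgroup (FundamentalGroup X x₀)}
    (hH : ∀ i j z, ∀ a ∈ classesIn (c i) x₀ z, ∀ b ∈ classesIn (c j) x₀ z, a.trans b.symm ∈ H) :
    H = ⊤ := by
  have exists_connecting (z : X) : ∃ i, (classesIn (c i) x₀ z).Nonempty := by
    obtain ⟨i, hi⟩ := Set.mem_iUnion.1 (hcover ▸ Set.mem_univ z)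
    exact ⟨i, nonempty_classesIn (hconn i) (hx₀ i) hi⟩
  have trans_trans_symm_mem {x y : X} (q : Path.Homotopic.Quotient x y) :
      ∀ i j, ∀ a ∈ classesIn (c i) x₀ x, ∀ b ∈ classesIn (c j) x₀ y,
        (a.trans q).trans b.symm ∈ H := by
    refine quotient_induction_of_cover hc hcover (P := fun x y q => ∀ i j,
      ∀ a ∈ classesIn (c i) x₀ x, ∀ b ∈ classesIn (c j) x₀ y, (a.trans q).trans b.symm ∈ H)
      ?_ ?_ q
    · intro l x y q hq i j a ha b hb
      obtain ⟨m, hm⟩ := nonempty_classesIn (hconn l) (hx₀ l) (mem_of_mem_classesIn hq).1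
      have := H.mul_mem (hH l j y _ (trans_mem_classesIn hm hq) b hb) (hH i l x a ha m hm)
      rwa [FundamentalGroup.mul_def, trans_symm_trans_trans_trans] at this
    · intro x y z q r hq hr i j a ha b hb
      obtain ⟨l, m, hm⟩ := exists_connecting y
      have := H.mul_mem (hr l j m hm b hb) (hq i l a ha m hm)
      rwa [FundamentalGroup.mul_def, trans_symm_trans_trans_trans,
        Path.Homotopic.Quotient.trans_assoc a] at this
  refine eq_top_iff.2 fun q _ => ?_
  obtain ⟨i, -⟩ := exists_connecting x₀
  have h := refl_mem_classesIn (hx₀ i)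
  have hq : ((Path.Homotopic.Quotient.refl x₀).trans q).trans (.refl x₀) ∈ H :=
    trans_trans_symm_mem q i i _ h _ h
  rwa [Path.Homotopic.Quotient.refl_trans, Path.Homotopic.Quotient.trans_refl] at hq

/-- A cover of `X` by simply connected open sets `U` and `V` whose intersection has the
path-connected components `W i`. -/
structure IsFreeCover (U V : Set X) (W : ι → Set X) : Prop where
  isOpen_left : IsOpen U
  isOpen_right : IsOpen V
  union_eq : U ∪ V = Set.univ
  isSimplyConnected_left : IsSimplyConnected U
  isSimplyConnected_right : IsSimplyConnected V
  inter_eq : U ∩ V = ⋃ i, W i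
  isOpen_component (i : ι) : IsOpen (W i)
  isPathConnected_component (i : ι) : IsPathConnected (W i)
  pairwise_disjoint : Pairwise (Function.onFun Disjoint W)

variable {U V : Set X}

theorem IsFreeCover.component_subset {W : ι → Set X} (h : IsFreeCover U V W) (i : ι) :
    W i ⊆ U ∩ V :=
  h.inter_eq ▸ Set.subset_iUnion W i

theorem IsFreeCover.trans_symm_eq_of_mem {W : ι → Set X} (h : IsFreeCover U V W) {i : ι} {z z' : X}
    (hz : z ∈ W i) (hz' : z' ∈ W i) {a b : Path.Homotopic.Quotient x₀ z}
    {a' b' : Path.Homotopic.Quotient x₀ z'} (ha : a ∈ classesIn U x₀ z)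
    (hb : b ∈ classesIn V x₀ z) (ha' : a' ∈ classesIn U x₀ z') (hb' : b' ∈ classesIn V x₀ z') :
    a.trans b.symm = a'.trans b'.symm := by
  obtain ⟨c, hc⟩ := nonempty_classesIn (h.isPathConnected_component i) hz' hz
  obtain ⟨hWU, hWV⟩ := Set.subset_inter_iff.1 (h.component_subset i)
  have hac : a'.trans c = a := subsingleton_classesIn h.isSimplyConnected_left
    (trans_mem_classesIn ha' (classesIn_mono hWU hc)) ha
  have hcb : c.trans b.symm = b'.symm := subsingleton_classesIn h.isSimplyConnected_right
    (trans_mem_classesIn (classesIn_mono hWV hc) (symm_mem_classesIn hb)) (symm_mem_classesIn hb')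
  rw [← hac, Path.Homotopic.Quotient.trans_assoc, hcb]

variable {W : Option ι → Set X}

theorem IsFreeCover.exists_nonempty_classesIn (h : IsFreeCover U V W) (hx₀ : x₀ ∈ W none)
    (i : Option ι) : ∃ z ∈ W i, (classesIn U x₀ z).Nonempty ∧ (classesIn V x₀ z).Nonempty := by
  have hx₀UV := h.component_subset none hx₀
  obtain ⟨z, hz⟩ := (h.isPathConnected_component i).nonempty
  have hzUV := h.component_subset i hz
  exact ⟨z, hz, nonempty_classesIn h.isSimplyConnected_left.isPathConnected hx₀UV.1 hzUV.1,
    nonempty_classesIn h.isSimplyConnected_right.isPathConnected hx₀UV.2 hzUV.2⟩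

theorem IsFreeCover.exists_crossing (h : IsFreeCover U V W) (hx₀ : x₀ ∈ W none) :
    ∃ g : Option ι → FundamentalGroup X x₀, g none = 1 ∧ ∀ i, ∀ z ∈ W i,
      ∀ a ∈ classesIn U x₀ z, ∀ b ∈ classesIn V x₀ z, a.trans b.symm = g i := by
  have hx₀UV := h.component_subset none hx₀
  have exists_eq (i : Option ι) : ∃ g : FundamentalGroup X x₀, ∀ z ∈ W i,
      ∀ a ∈ classesIn U x₀ z, ∀ b ∈ classesIn V x₀ z, a.trans b.symm = g := by
    obtain ⟨z, hz, ⟨a, ha⟩, b, hb⟩ := h.exists_nonempty_classesIn hx₀ i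
    exact ⟨a.trans b.symm, fun z' hz' a' ha' b' hb' =>
      h.trans_symm_eq_of_mem hz' hz ha' hb' ha hb⟩
  choose g hg using exists_eq
  refine ⟨g, ?_, hg⟩
  rw [← hg none x₀ hx₀ _ (refl_mem_classesIn hx₀UV.1) _ (refl_mem_classesIn hx₀UV.2)]
  exact Path.Homotopic.Quotient.trans_symm _

theorem IsFreeCover.eq_top (h : IsFreeCover U V W) (hx₀ : x₀ ∈ W none)
    {g : Option ι → FundamentalGroup X x₀} (hg : ∀ i, ∀ z ∈ W i,
      ∀ a ∈ classesIn U x₀ z, ∀ b ∈ classesIn V x₀ z, a.trans b.symm = g i)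
    {H : Subgroup (FundamentalGroup X x₀)} (hH : ∀ i, g i ∈ H) : H = ⊤ := by
  have crossing_mem {z : X} {a b : Path.Homotopic.Quotient x₀ z} (ha : a ∈ classesIn U x₀ z)
      (hb : b ∈ classesIn V x₀ z) : a.trans b.symm ∈ H := by
    have hz : z ∈ U ∩ V := ⟨(mem_of_mem_classesIn ha).2, (mem_of_mem_classesIn hb).2⟩
    obtain ⟨i, hi⟩ := Set.mem_iUnion.1 (h.inter_eq ▸ hz)
    exact hg i z hi a ha b hb ▸ hH i
  have hx₀UV := h.component_subset none hx₀
  refine subgroup_eq_top_of_cover (c := fun i : Bool => bif i then U else V)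
    (Bool.forall_bool.2 ⟨h.isOpen_right, h.isOpen_left⟩) ?_
    (Bool.forall_bool.2 ⟨h.isSimplyConnected_right.isPathConnected,
      h.isSimplyConnected_left.isPathConnected⟩) (Bool.forall_bool.2 ⟨hx₀UV.2, hx₀UV.1⟩) ?_
  · rw [← h.union_eq, Set.union_eq_iUnion]
  · rintro (_ | _) (_ | _) z a ha b hb
    · rw [subsingleton_classesIn h.isSimplyConnected_right ha hb,
        Path.Homotopic.Quotient.trans_symm]
      exact H.one_mem
    · exact symm_trans_symm b a ▸ H.inv_mem (crossing_mem hb ha)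
    · exact crossing_mem ha hb
    · rw [subsingleton_classesIn h.isSimplyConnected_left ha hb,
        Path.Homotopic.Quotient.trans_symm]
      exact H.one_mem

open Classical in
theorem exists_continuousOn_eq_of_pairwise_disjoint {Y : Type*} [TopologicalSpace Y] [Nonempty Y]
    {W : ι → Set X} (hW : ∀ i, IsOpen (W i)) (hdisj : Pairwise (Function.onFun Disjoint W))
    (v : ι → Y) : ∃ k : X → Y, ContinuousOn k (⋃ i, W i) ∧ ∀ i, ∀ z ∈ W i, k z = v i := by
  let k (z : X) : Y := if hz : ∃ i, z ∈ W i then v hz.choose else Classical.arbitrary Y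
  have hk (i : ι) (z : X) (hz : z ∈ W i) : k z = v i := by
    have hex : ∃ i, z ∈ W i := ⟨i, hz⟩
    simp only [k, dif_pos hex]
    exact congrArg v (hdisj.eq (Set.not_disjoint_iff.2 ⟨z, hex.choose_spec, hz⟩))
  exact ⟨k, .iUnion_of_isOpen (fun i => continuousOn_const.congr (hk i)) hW, hk⟩

theorem IsFreeCover.exists_monodromy (h : IsFreeCover U V W) (hx₀ : x₀ ∈ W none)
    {g : Option ι → FundamentalGroup X x₀} (hg : ∀ i, ∀ z ∈ W i,
      ∀ a ∈ classesIn U x₀ z, ∀ b ∈ classesIn V x₀ z, a.trans b.symm = g i) :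
    ∃ ρ : FundamentalGroup X x₀ →* Equiv.Perm (FreeGroup ι),
      ∀ i, ρ (g (some i)) = MulAction.toPerm (FreeGroup.of i) := by
  let _ : TopologicalSpace (FreeGroup ι) := ⊥
  have : DiscreteTopology (FreeGroup ι) := ⟨rfl⟩
  obtain ⟨k, hk, hkW⟩ := exists_continuousOn_eq_of_pairwise_disjoint h.isOpen_component
    h.pairwise_disjoint fun i => i.elim 1 FreeGroup.of
  obtain ⟨ρ, hρ⟩ := exists_monodromy_of_cover h.isOpen_left h.isOpen_right h.union_eq
    (h.inter_eq ▸ hk) (hkW none x₀ hx₀)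
  refine ⟨ρ, fun i => ?_⟩
  obtain ⟨z, hz, ⟨a, ha⟩, b, hb⟩ := h.exists_nonempty_classesIn hx₀ (some i)
  rw [← hg _ z hz a ha b hb, hρ z a ha b hb, hkW _ z hz, Option.elim_some]

theorem IsFreeCover.nonempty_mulEquiv_fundamentalGroup (h : IsFreeCover U V W)
    (hx₀ : x₀ ∈ W none) : Nonempty (FreeGroup ι ≃* FundamentalGroup X x₀) := by
  obtain ⟨g, hg₀, hg⟩ := h.exists_crossing hx₀
  obtain ⟨ρ, hρ⟩ := h.exists_monodromy hx₀ hg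
  let Ψ : FreeGroup ι →* FundamentalGroup X x₀ := FreeGroup.lift fun i => g (some i)
  have hΨ (i : ι) : Ψ (FreeGroup.of i) = g (some i) := FreeGroup.lift_apply_of
  refine ⟨.ofBijective Ψ ⟨?_, ?_⟩⟩
  · have hcomp : ρ.comp Ψ = MulAction.toPermHom (FreeGroup ι) (FreeGroup ι) :=
      FreeGroup.ext_hom _ _ fun i => (congrArg ρ (hΨ i)).trans (hρ i)
    refine Function.Injective.of_comp (f := ρ) ?_
    rw [← MonoidHom.coe_comp, hcomp]
    exact MulAction.toPerm_injective
  · refine MonoidHom.range_eq_top.1 (h.eq_top hx₀ hg ?_)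
    rintro (_ | i)
    · exact hg₀ ▸ Ψ.range.one_mem
    · exact ⟨_, hΨ i⟩

end FreeCover

section SlitPlane

theorem homotopic_of_segment_subset {Y E : Type*} [TopologicalSpace Y] [AddCommGroup E]
    [Module ℝ E] [TopologicalSpace E] [IsTopologicalAddGroup E] [ContinuousSMul ℝ E] {s : Set E}
    {f g : C(Y, s)} (h : ∀ y, segment ℝ (f y : E) (g y) ⊆ s) : f.Homotopic g := by
  let incl : C(s, E) := ⟨Subtype.val, continuous_subtype_val⟩
  let H := ContinuousMap.Homotopy.affine (incl.comp f) (incl.comp g)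
  have hH (q : I × Y) : H q ∈ s :=
    h q.2 (Path.range_segment (f q.2 : E) (g q.2) ▸ Set.mem_range_self (ι := I) q.1)
  exact ⟨⟨⟨fun q => ⟨H q, hH q⟩, H.continuous.subtype_mk hH⟩,
    fun y => Subtype.ext (H.apply_zero y), fun y => Subtype.ext (H.apply_one y)⟩⟩

theorem isSimplyConnected_of_segment_subset {E : Type*} [AddCommGroup E] [Module ℝ E]
    [TopologicalSpace E] [IsTopologicalAddGroup E] [ContinuousSMul ℝ E] {s : Set E} {r : E → E}
    {c : E} (hr : Continuous r) (hc : c ∈ s) (hsr : ∀ z ∈ s, segment ℝ z (r z) ⊆ s)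
    (hrc : ∀ z ∈ s, segment ℝ (r z) c ⊆ s) : IsSimplyConnected s := by
  let r' : C(s, s) := ⟨fun z => ⟨r z, hsr z z.2 (right_mem_segment ℝ _ _)⟩, by fun_prop⟩
  have hnull : (ContinuousMap.id s).Homotopic (.const s ⟨c, hc⟩) :=
    .trans (g := r') (homotopic_of_segment_subset fun z => hsr z z.2)
      (homotopic_of_segment_subset fun z => hrc z z.2)
  have : ContractibleSpace s := (contractible_iff_id_nullhomotopic s).2 ⟨_, hnull⟩
  exact SimplyConnectedSpace.ofContractible s

section Gap

variable {ι α : Type*} [LinearOrder α] {u : ι → α}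

/-- The components of the complement of the points `u i`: the one to the right of all of them for
`none`, the one directly to the left of `u j` for `some j`. -/
def gap (u : ι → α) : Option ι → Set α
  | none => ⋂ i, Set.Ioi (u i)
  | some j => Set.Iio (u j) ∩ ⋂ i, ⋂ _ : u i < u j, Set.Ioi (u i)

theorem ordConnected_gap (u : ι → α) : ∀ o, (gap u o).OrdConnected
  | none => Set.ordConnected_iInter fun _ => Set.ordConnected_Ioi
  | some _ => Set.ordConnected_Iio.inter <|
      Set.ordConnected_iInter fun _ => Set.ordConnected_iInter fun _ => Set.ordConnected_Ioi

theorem pairwise_disjoint_gap (hu : Function.Injective u) :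
    Pairwise (Function.onFun Disjoint (gap u)) := by
  have disjoint_of_lt {i j : ι} (hij : u i < u j) : Disjoint (gap u (some i)) (gap u (some j)) :=
    Set.disjoint_left.2 fun z hi hj => lt_asymm hi.1 (Set.mem_iInter₂.1 hj.2 i hij)
  have disjoint_none (j : ι) : Disjoint (gap u none) (gap u (some j)) :=
    Set.disjoint_left.2 fun z h hj => lt_asymm hj.1 (Set.mem_iInter.1 h j)
  rintro (_ | i) (_ | j) hij
  · exact absurd rfl hij
  · exact disjoint_none j
  · exact (disjoint_none i).symm
  · have hne : u i ≠ u j := hu.ne fun h => hij (congrArg some h)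
    exact hne.lt_or_gt.elim disjoint_of_lt fun h => (disjoint_of_lt h).symm

variable [Finite ι]

theorem iUnion_gap (u : ι → α) : ⋃ o, gap u o = (Set.range u)ᶜ := by
  ext z
  rw [Set.mem_iUnion, Set.mem_compl_iff, Set.mem_range, not_exists]
  constructor
  · rintro ⟨_ | j, hz⟩ i
    · exact (Set.mem_iInter.1 hz i).ne
    · rcases lt_or_ge (u i) (u j) with hij | hji
      · exact (Set.mem_iInter₂.1 hz.2 i hij).ne
      · exact (hz.1.trans_le hji).ne'
  · intro hz
    rcases {i | z < u i}.eq_empty_or_nonempty with hempty | hne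
    · exact ⟨none, Set.mem_iInter.2 fun i =>
        (lt_or_gt_of_ne (hz i)).resolve_right (Set.eq_empty_iff_forall_notMem.1 hempty i)⟩
    · obtain ⟨j, hj, hmin⟩ := Set.exists_min_image _ u (Set.toFinite _) hne
      exact ⟨some j, hj, Set.mem_iInter₂.2 fun i hij =>
        (lt_or_gt_of_ne (hz i)).resolve_right fun hi => hij.not_ge (hmin i hi)⟩

variable [TopologicalSpace α] [OrderTopology α]

theorem isOpen_gap (u : ι → α) : ∀ o, IsOpen (gap u o)
  | none => isOpen_iInter_of_finite fun _ => isOpen_Ioi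
  | some _ => isOpen_Iio.inter <|
      isOpen_iInter_of_finite fun _ => isOpen_iInter_of_finite fun _ => isOpen_Ioi

theorem nonempty_gap [DenselyOrdered α] [NoMinOrder α] [NoMaxOrder α] [Nonempty α] (u : ι → α) :
    ∀ o, (gap u o).Nonempty
  | none => (Filter.eventually_all.2 fun i => Filter.eventually_gt_atTop (u i)).exists.imp
      fun _ => Set.mem_iInter.2
  | some j => by
    have hgt : ∀ᶠ z in 𝓝[<] u j, ∀ i, u i < u j → u i < z :=
      Filter.eventually_all.2 fun i => Filter.eventually_imp_distrib_left.2 fun hij =>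
        eventually_nhdsWithin_of_eventually_nhds (eventually_gt_nhds hij)
    obtain ⟨z, hz, hlt⟩ := (hgt.and self_mem_nhdsWithin).exists
    exact ⟨z, hlt, Set.mem_iInter₂.2 hz⟩

end Gap

variable {ι : Type*} {b : ι → ℂ}

/-- The plane with the closed vertical rays going down from the points `b i` removed. -/
def upperSlit (b : ι → ℂ) : Set ℂ := {z | ∀ i, z.re = (b i).re → (b i).im < z.im}

/-- The plane with the closed vertical rays going up from the points `b i` removed. -/
def lowerSlit (b : ι → ℂ) : Set ℂ := {z | ∀ i, z.re = (b i).re → z.im < (b i).im}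

theorem lowerSlit_eq (b : ι → ℂ) : lowerSlit b = Homeomorph.neg ℂ ⁻¹' upperSlit (-b) := by
  ext z
  simp [lowerSlit, upperSlit]

theorem upperSlit_subset (b : ι → ℂ) : upperSlit b ⊆ (Set.range b)ᶜ := by
  rintro _ hz ⟨i, rfl⟩
  exact lt_irrefl _ (hz i rfl)

theorem lowerSlit_subset (b : ι → ℂ) : lowerSlit b ⊆ (Set.range b)ᶜ := by
  rintro _ hz ⟨i, rfl⟩
  exact lt_irrefl _ (hz i rfl)

theorem upperSlit_inter_lowerSlit (b : ι → ℂ) :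
    upperSlit b ∩ lowerSlit b = Complex.re ⁻¹' (Set.range fun i => (b i).re)ᶜ := by
  ext z
  exact ⟨fun h ⟨i, hi⟩ => lt_asymm (h.1 i hi.symm) (h.2 i hi.symm), fun h =>
    ⟨fun i hi => absurd ⟨i, hi.symm⟩ h, fun i hi => absurd ⟨i, hi.symm⟩ h⟩⟩

theorem compl_range_subset_union (hb : Function.Injective fun i => (b i).re) :
    (Set.range b)ᶜ ⊆ upperSlit b ∪ lowerSlit b := by
  intro z hz
  by_cases hre : ∃ i, z.re = (b i).re
  · obtain ⟨i, hi⟩ := hre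
    have eq_of_re_eq (j : ι) (hj : z.re = (b j).re) : i = j := hb (hi.symm.trans hj)
    have him : z.im ≠ (b i).im := fun him => hz ⟨i, (Complex.ext hi him).symm⟩
    rcases him.lt_or_gt with hlt | hgt
    · exact .inr fun j hj => eq_of_re_eq j hj ▸ hlt
    · exact .inl fun j hj => eq_of_re_eq j hj ▸ hgt
  · exact .inl fun i hi => absurd ⟨i, hi⟩ hre

section Finite

variable [Finite ι]

theorem isOpen_upperSlit (b : ι → ℂ) : IsOpen (upperSlit b) := by
  have heq : upperSlit b = ⋂ i, {z | z.re ≠ (b i).re} ∪ {z | (b i).im < z.im} := by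
    ext z
    simp [upperSlit, imp_iff_not_or]
  rw [heq]
  exact isOpen_iInter_of_finite fun i =>
    (isOpen_ne_fun Complex.continuous_re continuous_const).union
      (isOpen_lt continuous_const Complex.continuous_im)

theorem isOpen_lowerSlit (b : ι → ℂ) : IsOpen (lowerSlit b) :=
  lowerSlit_eq b ▸ (isOpen_upperSlit _).preimage (Homeomorph.neg ℂ).continuous

/-- Push upwards until above all the points, then contract a convex half plane. -/
theorem isSimplyConnected_upperSlit (b : ι → ℂ) : IsSimplyConnected (upperSlit b) := by
  obtain ⟨L, hL⟩ : ∃ L : ℝ, ∀ i, (b i).im < L :=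
    (Filter.eventually_all.2 fun i => Filter.eventually_gt_atTop (b i).im).exists
  have above_subset : {z : ℂ | L ≤ z.im} ⊆ upperSlit b := fun z hz i _ => (hL i).trans_le hz
  refine isSimplyConnected_of_segment_subset (r := fun z => z.re + max L z.im * Complex.I)
    (c := L * Complex.I) (by fun_prop) (above_subset (by simp)) (fun z hz => ?_) fun z _ => ?_
  · rintro _ ⟨s, t, _, ht, hst, rfl⟩ i hi
    have hre : z.re = (b i).re := by simpa [← add_mul, hst] using hi
    have him : (s • z + t • (z.re + max L z.im * Complex.I : ℂ)).im =
        s * z.im + t * max L z.im := by simp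
    calc (b i).im
      _ < z.im := hz i hre
      _ = s * z.im + t * z.im := by rw [← add_mul, hst, one_mul]
      _ ≤ s * z.im + t * max L z.im := by gcongr; exact le_max_right _ _
      _ = _ := him.symm
  · exact ((convex_halfSpace_im_ge L).segment_subset (by simp) (by simp)).trans above_subset

theorem isSimplyConnected_lowerSlit (b : ι → ℂ) : IsSimplyConnected (lowerSlit b) := by
  rw [lowerSlit_eq, Homeomorph.isSimplyConnected_preimage]
  exact isSimplyConnected_upperSlit _

theorem isSimplyConnected_preimage_coe {X : Type*} [TopologicalSpace X] {s t : Set X}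
    (hs : IsSimplyConnected s) (hst : s ⊆ t) : IsSimplyConnected ((↑) ⁻¹' s : Set t) := by
  rwa [← Topology.IsEmbedding.subtypeVal.isSimplyConnected_image, Subtype.image_preimage_val,
    Set.inter_eq_right.2 hst]

theorem isPathConnected_re_preimage {s : Set ℝ} (hs : s.OrdConnected) (hne : s.Nonempty) :
    IsPathConnected (Complex.re ⁻¹' s) :=
  (hs.convex.linear_preimage Complex.reLm).isPathConnected (hne.preimage Complex.re_surjective)

theorem isFreeCover_slit (hb : Function.Injective fun i => (b i).re) :
    IsFreeCover (X := ↥(Set.range b)ᶜ) (Subtype.val ⁻¹' upperSlit b) (Subtype.val ⁻¹' lowerSlit b)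
      fun o => Subtype.val ⁻¹' (Complex.re ⁻¹' gap (fun i => (b i).re) o) where
  isOpen_left := (isOpen_upperSlit b).preimage continuous_subtype_val
  isOpen_right := (isOpen_lowerSlit b).preimage continuous_subtype_val
  union_eq := Set.eq_univ_of_forall fun z => compl_range_subset_union hb z.2
  isSimplyConnected_left :=
    isSimplyConnected_preimage_coe (isSimplyConnected_upperSlit b) (upperSlit_subset b)
  isSimplyConnected_right :=
    isSimplyConnected_preimage_coe (isSimplyConnected_lowerSlit b) (lowerSlit_subset b)
  inter_eq := by
    rw [← Set.preimage_inter, upperSlit_inter_lowerSlit, ← iUnion_gap fun i => (b i).re]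
    simp only [Set.preimage_iUnion]
  isOpen_component o :=
    ((isOpen_gap _ o).preimage Complex.continuous_re).preimage continuous_subtype_val
  isPathConnected_component o :=
    (isPathConnected_re_preimage (ordConnected_gap _ o) (nonempty_gap _ o)).preimage_coe
      ((Set.preimage_mono ((Set.subset_iUnion _ o).trans (iUnion_gap _).subset)).trans
        fun _ hz ⟨i, hi⟩ => hz ⟨i, congrArg Complex.re hi⟩)
  pairwise_disjoint _ _ hij := ((pairwise_disjoint_gap hb hij).preimage _).preimage _

end Finite

end SlitPlane

section PuncturedPlane

theorem nonempty_mulEquiv_of_homeomorph {X Y : Type*} [TopologicalSpace X] [TopologicalSpace Y]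
    (e : X ≃ₜ Y) (x : X) : Nonempty (FundamentalGroup X x ≃* FundamentalGroup Y (e x)) :=
  ⟨(FundamentalGroupoidFunctor.equivOfHomotopyEquiv
    e.toHomotopyEquiv).fullyFaithfulFunctor.mulEquivEnd _⟩

theorem exists_injective_re_mul {ι : Type*} [Finite ι] {b : ι → ℂ} (hb : Function.Injective b) :
    ∃ c : ℂ, c ≠ 0 ∧ Function.Injective fun i => (c * b i).re := by
  obtain ⟨t, ht⟩ := (Set.finite_range fun p : ι × ι =>
    ((b p.1).re - (b p.2).re) / ((b p.2).im - (b p.1).im)).exists_notMem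
  refine ⟨1 - t * Complex.I, fun h => by simpa using congrArg Complex.re h, fun i j hij => ?_⟩
  have re_mul (k : ι) : ((1 - t * Complex.I) * b k).re = (b k).re + t * (b k).im := by simp
  have hline : (b i).re - (b j).re = t * ((b j).im - (b i).im) := by
    linarith [(re_mul i).symm.trans (hij.trans (re_mul j))]
  by_cases him : (b i).im = (b j).im
  · exact hb (Complex.ext (by simpa [him, sub_eq_zero] using hline) him)
  · exact absurd ⟨(i, j), (eq_div_of_mul_eq (sub_ne_zero.2 (Ne.symm him)) hline.symm).symm⟩ ht

theorem isPathConnected_compl_range {ι : Type*} [Finite ι] (b : ι → ℂ) :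
    IsPathConnected (Set.range b)ᶜ :=
  (Set.finite_range b).countable.isPathConnected_compl_of_one_lt_rank
    (by rw [Complex.rank_real_complex]; exact Cardinal.one_lt_two)

theorem nonempty_mulEquiv_compl_range {ι : Type*} [Finite ι] {b : ι → ℂ}
    (hb : Function.Injective b) (y : ↥(Set.range b)ᶜ) :
    Nonempty (FreeGroup ι ≃* FundamentalGroup ↥(Set.range b)ᶜ y) := by
  obtain ⟨c, hc, hre⟩ := exists_injective_re_mul hb
  let e : ↥(Set.range b)ᶜ ≃ₜ ↥(Set.range fun i => c * b i)ᶜ :=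
    (Homeomorph.mulLeft₀ c hc).subtype fun z => by simp [mul_right_inj' hc]
  have hcover := isFreeCover_slit hre
  obtain ⟨y₀, hy₀⟩ := (hcover.isPathConnected_component none).nonempty
  obtain ⟨φ⟩ := hcover.nonempty_mulEquiv_fundamentalGroup hy₀
  obtain ⟨ψ⟩ := nonempty_mulEquiv_of_homeomorph e y
  have := isPathConnected_iff_pathConnectedSpace.1 (isPathConnected_compl_range fun i => c * b i)
  exact ⟨(φ.trans (FundamentalGroup.fundamentalGroupMulEquivOfPathConnected y₀ (e y))).trans ψ.symm⟩

end PuncturedPlane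

theorem Conf.isStronglyPolyFree_fundamentalGroup :
    ∀ (n : ℕ) (x : Conf n ℂ), IsStronglyPolyFree (FundamentalGroup (Conf n ℂ) x) n
  | 0, x =>
    have := uniqueOfSubsingleton x
    have : SimplyConnectedSpace (Conf 0 ℂ) := .ofContractible _
    isStronglyPolyFree_zero
  | n + 1, x => by
    obtain ⟨s, hs⟩ := Conf.exists_section_tail (n := n) (V := ℂ)
    refine Conf.hasRegularTransport_tail.isStronglyPolyFree_succ (k := n) s hs (fun b => ?_)
      (fun b y => ?_) (isStronglyPolyFree_fundamentalGroup n) x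
    · have := isPathConnected_iff_pathConnectedSpace.1 (isPathConnected_compl_range b.1)
      exact isPathConnected_iff_pathConnectedSpace.2
        ((fibreHomeomorph b).symm.surjective.pathConnectedSpace (fibreHomeomorph b).symm.continuous)
    · obtain ⟨φ⟩ := nonempty_mulEquiv_compl_range b.2 (fibreHomeomorph b y)
      obtain ⟨ψ⟩ := nonempty_mulEquiv_of_homeomorph (fibreHomeomorph b) y
      exact ⟨φ.trans ψ.symm⟩

end PureBraid

/-- The pure braid group on `n ≥ 1` strands, i.e. the fundamental group of the
ordered configuration space of `n` points in `ℂ`, admits a filtration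
`1 = G₀ ≤ G₁ ≤ ⋯ ≤ Gₙ = P` by normal subgroups of `P` whose successive quotients are
finitely generated free groups (the quotient `G_{i+1}/Gᵢ` is expressed by a surjection
`G_{i+1} → FreeGroup (Fin k)` with kernel `Gᵢ`). -/
theorem pureBraidGroup_stronglyPolyFree_filtration (n : ℕ) (hn : 1 ≤ n)
    (x : {f : Fin n → ℂ // Function.Injective f}) :
    ∃ G : Fin (n + 1) →
        Subgroup (FundamentalGroup {f : Fin n → ℂ // Function.Injective f} x),
      G 0 = ⊥ ∧ G (Fin.last n) = ⊤ ∧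
      (∀ i, (G i).Normal) ∧
      (∀ i : Fin n, G i.castSucc ≤ G i.succ) ∧
      (∀ i : Fin n, ∃ (k : ℕ) (ψ : (G i.succ) →* FreeGroup (Fin k)),
        Function.Surjective ψ ∧
        ∀ g : G i.succ, ψ g = 1 ↔ (g : FundamentalGroup _ x) ∈ G i.castSucc) :=
  PureBraid.Conf.isStronglyPolyFree_fundamentalGroup n x
end

section
/- Let n ≥ 1, let Conf_n(ℂ) = {f : Fin n → ℂ | f injective} be the ordered configuration space of n points in ℂ, and let the symmetric group S_n = Perm(Fin n) act on Conf_n(ℂ) by σ • f = f ∘ σ⁻¹. Let UConf_n(ℂ) be the orbit space Conf_n(ℂ)/S_n with the quotient topology, let x ∈ Conf_n(ℂ) and let q ∈ UConf_n(ℂ) be the image of x. Then there exists a surjective group homomorphism φ : π₁(UConf_n(ℂ), q) → Perm(Fin n) whose kernel is isomorphic to π₁(Conf_n(ℂ), x). In other words, there is a short exact sequence 1 → B_n(ℂ) → FB_n(ℂ) → S_n → 1 relating the pure braid group B_n(ℂ) and the full braid group FB_n(ℂ). -/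
/-- The ordered configuration space of `n` points in `ℂ`. -/
abbrev ComplexConf (n : ℕ) : Type := {f : Fin n → ℂ // Function.Injective f}

instance complexConfPermSMul (n : ℕ) : SMul (Equiv.Perm (Fin n)) (ComplexConf n) :=
  ⟨fun σ f => ⟨fun i => f.1 (σ⁻¹ i), f.2.comp (Equiv.injective _)⟩⟩

/-- The symmetric group `Sₙ` acts on the configuration space by `σ • f = f ∘ σ⁻¹`. -/
instance complexConfPermAction (n : ℕ) :
    MulAction (Equiv.Perm (Fin n)) (ComplexConf n) where
  one_smul f := Subtype.ext (funext fun i =>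
    show f.1 ((1 : Equiv.Perm (Fin n))⁻¹ i) = f.1 i by simp)
  mul_smul σ τ f := Subtype.ext (funext fun i =>
    show f.1 ((σ * τ)⁻¹ i) = f.1 (τ⁻¹ (σ⁻¹ i)) by simp [mul_inv_rev])

/-- The unordered configuration space: the orbit space `Confₙ(ℂ)/Sₙ`, with the quotient
topology. -/
abbrev ComplexUConf (n : ℕ) : Type :=
  Quotient (MulAction.orbitRel (Equiv.Perm (Fin n)) (ComplexConf n))

/-!
The symmetric group acts freely on ordered configurations, and a free continuous action of a finite
group on a Hausdorff space is a covering space action, so `Conf → Conf / Sₙ` is a covering with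
deck group `Sₙ`. Lifting loops yields a homomorphism from `π₁` of the quotient to `Sₙ`; its kernel
consists of the loops that lift to loops, which is the injective image of `π₁` of the total space,
and it is onto because `Conf` is path connected. For the latter, given two configurations, choose a
line `ℝv` parallel to none of the differences of their points: sliding the points of either one
along straight segments to distinct points of `ℝv` never produces a collision.
-/

section Covering

variable {E X G : Type*} [TopologicalSpace E] [TopologicalSpace X] {p : E → X}

theorem mapOfEq_injective_of_isCoveringMap (hp : IsCoveringMap p) {e : E} {x : X} (he : p e = x) :
    Function.Injective (FundamentalGroup.mapOfEq ⟨p, hp.continuous⟩ he) := by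
  subst he
  intro γ γ' h
  rw [FundamentalGroup.mapOfEq_apply, FundamentalGroup.mapOfEq_apply] at h
  exact hp.injective_path_homotopic_map e e (by simpa using h)

variable [Group G] [MulAction G E] (hp : IsQuotientCoveringMap p G) {x : X} (e : p ⁻¹' {x})

/-- The homomorphism from the fundamental group of the base of a quotient covering map to the group
acting on the total space, sending a loop to the inverse of the `g` such that its lift starting at
`e` ends at `g • e`. The inverse makes this a homomorphism to `G` rather than to `Gᵐᵒᵖ`. -/
noncomputable def fundamentalGroupToGroup : FundamentalGroup X x →* G :=
  ((MulEquiv.inv' G).symm : Gᵐᵒᵖ →* G).comp (hp.fundamentalGroupToMulOpposite e)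

theorem fundamentalGroupToGroup_surjective [PathConnectedSpace E] :
    Function.Surjective (fundamentalGroupToGroup hp e) :=
  (MulEquiv.inv' G).symm.surjective.comp (hp.fundamentalGroupToMulOpposite_surjective e)

theorem ker_fundamentalGroupToGroup :
    (fundamentalGroupToGroup hp e).ker =
      (FundamentalGroup.mapOfEq ⟨p, hp.continuous⟩ e.2).range :=
  calc
    (fundamentalGroupToGroup hp e).ker = (hp.fundamentalGroupToMulOpposite e).ker :=
      MonoidHom.ker_mulEquiv_comp _ _
    _ = (hp.isCoveringMap.monodromyPerm x).ker := hp.ker_fundamentalGroupToMulOpposite e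
    _ = (FundamentalGroup.mapOfEq ⟨p, hp.continuous⟩ e.2).range := hp.ker_monodromyPerm e

/-- The fundamental group of the total space of a quotient covering map, as the kernel of
`fundamentalGroupToGroup`. -/
noncomputable def kerFundamentalGroupToGroupEquiv :
    (fundamentalGroupToGroup hp e).ker ≃* FundamentalGroup E e.1 :=
  (MulEquiv.subgroupCongr (ker_fundamentalGroupToGroup hp e)).trans
    (MonoidHom.ofInjective (mapOfEq_injective_of_isCoveringMap hp.isCoveringMap e.2)).symm

end Covering

section FiniteFreeAction

variable {G E : Type*} [Group G] [Finite G] [TopologicalSpace E] [T2Space E] [MulAction G E]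
  [ContinuousConstSMul G E] [IsCancelSMul G E]

theorem exists_nhds_forall_image_smul_inter_nonempty_eq_one (e : E) :
    ∃ U ∈ nhds e, ∀ g : G, ((g • ·) '' U ∩ U).Nonempty → g = 1 := by
  obtain ⟨V, hV, hdisj⟩ := (Set.finite_range fun g : G ↦ g • e).t2_separation
  refine ⟨⋂ g : G, (g • ·) ⁻¹' V (g • e), ?_, ?_⟩
  · exact Filter.iInter_mem.mpr fun g ↦
      (continuous_const_smul g).continuousAt.preimage_mem_nhds ((hV _).2.mem_nhds (hV _).1)
  · rintro g ⟨-, ⟨y, hy, rfl⟩, hgy⟩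
    have hgy_left : g • y ∈ V (g • e) := Set.mem_iInter.mp hy g
    have hgy_right : g • y ∈ V e := by simpa using Set.mem_iInter.mp hgy 1
    have hge : g • e = e :=
      hdisj.elim_set ⟨g, rfl⟩ ⟨1, one_smul G e⟩ (g • y) hgy_left hgy_right
    exact isCancelSMul_iff_eq_one_of_smul_eq.mp inferInstance g e hge

theorem isQuotientCoveringMap_quotientMk_of_finite :
    IsQuotientCoveringMap (Quotient.mk (MulAction.orbitRel G E)) G where
  toIsQuotientMap := isQuotientMap_quotient_mk'
  apply_eq_iff_mem_orbit := Quotient.eq''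
  disjoint := exists_nhds_forall_image_smul_inter_nonempty_eq_one

end FiniteFreeAction

section LinearConfigurations

variable {ι K V : Type*} [AddCommGroup V]

theorem exists_forall_notMem_span_singleton [DivisionRing K] [Infinite K] [Module K V]
    (hV : 1 < Module.rank K V) {s : Set V} (hs : s.Finite) :
    ∃ v : V, ∀ w ∈ s, v ∉ Submodule.span K {w} := by
  have hspan (w : V) : Submodule.span K {w} ≠ ⊤ := fun h ↦
    hV.not_ge (Module.rank_le_one_iff_top_isPrincipal.mpr ⟨w, h.symm⟩)
  by_contra! hcover
  have := hs.to_subtype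
  obtain ⟨w, hw⟩ := Subspace.exists_eq_top_of_iUnion_eq_univ
    (p := fun w : s ↦ Submodule.span K {w.1}) <| Set.eq_univ_of_forall fun v ↦
      have ⟨w, hw, hv⟩ := hcover v
      Set.mem_iUnion.mpr ⟨⟨w, hw⟩, hv⟩
  exact hspan w hw

theorem injective_lineMap_smul [Field K] [Module K V] {f : ι → V} (hf : f.Injective)
    {c : ι → K} (hc : c.Injective) {v : V} (hv : ∀ i j, v ∉ Submodule.span K {f i - f j}) (t : K) :
    Function.Injective (AffineMap.lineMap f (fun i ↦ c i • v) t) := by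
  intro i j hij
  by_contra hne
  have hcollision : (t * (c i - c j)) • v = (t - 1) • (f i - f j) := by
    simp only [AffineMap.lineMap_apply_module, Pi.add_apply, Pi.smul_apply] at hij
    linear_combination (norm := module) hij
  obtain rfl | ht := eq_or_ne t 0
  · exact hne (hf (by simpa using hij))
  · have hcoeff : t * (c i - c j) ≠ 0 := mul_ne_zero ht (sub_ne_zero.mpr (hc.ne hne))
    refine hv i j ((Submodule.smul_mem_iff _ hcoeff).mp ?_)
    exact hcollision ▸ Submodule.smul_mem _ _ (Submodule.mem_span_singleton_self _)

variable [Module ℝ V] [TopologicalSpace V] [IsTopologicalAddGroup V] [ContinuousSMul ℝ V]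

theorem joinedIn_setOf_injective_smul {f : ι → V} (hf : f.Injective) {c : ι → ℝ}
    (hc : c.Injective) {v : V} (hv : ∀ i j, v ∉ Submodule.span ℝ {f i - f j}) :
    JoinedIn {f : ι → V | f.Injective} f (fun i ↦ c i • v) :=
  JoinedIn.ofLine (f := AffineMap.lineMap f fun i ↦ c i • v)
    AffineMap.lineMap_continuous.continuousOn (AffineMap.lineMap_apply_zero _ _)
    (AffineMap.lineMap_apply_one _ _)
    (Set.image_subset_iff.mpr fun t _ ↦ injective_lineMap_smul hf hc hv t)

theorem isPathConnected_setOf_injective [Finite ι] (hV : 1 < Module.rank ℝ V) :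
    IsPathConnected {f : ι → V | f.Injective} := by
  obtain ⟨c, hc⟩ : ∃ c : ι → ℝ, c.Injective :=
    have ⟨k, hk⟩ := Countable.exists_injective_nat ι
    ⟨fun i ↦ k i, Nat.cast_injective.comp hk⟩
  refine isPathConnected_iff.mpr ⟨?_, fun f hf g hg ↦ ?_⟩
  · have := rank_pos_iff_nontrivial.mp (zero_lt_one.trans hV)
    obtain ⟨v, hv⟩ := exists_ne (0 : V)
    exact ⟨fun i ↦ c i • v, (smul_left_injective ℝ hv).comp hc⟩
  · let differences (h : ι → V) : Set V := Set.range fun q : ι × ι ↦ h q.1 - h q.2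
    obtain ⟨v, hv⟩ := exists_forall_notMem_span_singleton (K := ℝ) hV
      ((Set.finite_range _).union (Set.finite_range _) : (differences f ∪ differences g).Finite)
    have hvf i j : v ∉ Submodule.span ℝ {f i - f j} := hv _ (.inl ⟨(i, j), rfl⟩)
    have hvg i j : v ∉ Submodule.span ℝ {g i - g j} := hv _ (.inr ⟨(i, j), rfl⟩)
    exact (joinedIn_setOf_injective_smul hf hc hvf).trans
      (joinedIn_setOf_injective_smul hg hc hvg).symm

end LinearConfigurations

/-- The ordered configuration space of points of `Y` labelled by `ι`. It is a `def`, not an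
`abbrev`, so that instances on it do not compete with those on `ComplexConf n`. -/
def OrderedConf (ι Y : Type*) : Type _ := {f : ι → Y // Function.Injective f}

namespace OrderedConf

variable {ι Y : Type*}

instance : MulAction (Equiv.Perm ι) (OrderedConf ι Y) where
  smul σ f := ⟨fun i ↦ f.1 (σ⁻¹ i), f.2.comp (Equiv.injective _)⟩
  one_smul _ := rfl
  mul_smul _ _ _ := rfl

theorem smul_val_apply (σ : Equiv.Perm ι) (f : OrderedConf ι Y) (i : ι) :
    (σ • f).1 i = f.1 (σ⁻¹ i) := rfl

instance : IsCancelSMul (Equiv.Perm ι) (OrderedConf ι Y) :=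
  isCancelSMul_iff_eq_one_of_smul_eq.mpr fun σ f hσ ↦ inv_eq_one.mp <| Equiv.ext fun i ↦
    f.2 <| by rw [← smul_val_apply, hσ, Equiv.Perm.one_apply]

variable [TopologicalSpace Y]

instance : TopologicalSpace (OrderedConf ι Y) := instTopologicalSpaceSubtype

instance [T2Space Y] : T2Space (OrderedConf ι Y) :=
  inferInstanceAs (T2Space {f : ι → Y // Function.Injective f})

instance : ContinuousConstSMul (Equiv.Perm ι) (OrderedConf ι Y) where
  continuous_const_smul σ :=
    have hval : Continuous fun f : OrderedConf ι Y ↦ (σ • f).1 :=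
      continuous_pi fun i ↦ (continuous_apply (σ⁻¹ i)).comp continuous_subtype_val
    hval.subtype_mk fun f ↦ (σ • f).2

theorem pathConnectedSpace_of_one_lt_rank {V : Type*} [Finite ι] [AddCommGroup V] [Module ℝ V]
    [TopologicalSpace V] [IsTopologicalAddGroup V] [ContinuousSMul ℝ V]
    (hV : 1 < Module.rank ℝ V) : PathConnectedSpace (OrderedConf ι V) :=
  isPathConnected_iff_pathConnectedSpace.mp (isPathConnected_setOf_injective hV)

end OrderedConf

theorem fullBraid_surjects_onto_symmetricGroup_general {ι Y : Type*} [Finite ι]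
    [TopologicalSpace Y] [T2Space Y] [PathConnectedSpace (OrderedConf ι Y)] (x : OrderedConf ι Y) :
    ∃ φ : FundamentalGroup (Quotient (MulAction.orbitRel (Equiv.Perm ι) (OrderedConf ι Y)))
        (Quotient.mk (MulAction.orbitRel (Equiv.Perm ι) (OrderedConf ι Y)) x) →* Equiv.Perm ι,
      Function.Surjective φ ∧ Nonempty (φ.ker ≃* FundamentalGroup (OrderedConf ι Y) x) :=
  have hp := isQuotientCoveringMap_quotientMk_of_finite
    (G := Equiv.Perm ι) (E := OrderedConf ι Y)
  ⟨fundamentalGroupToGroup hp ⟨x, rfl⟩, fundamentalGroupToGroup_surjective hp _,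
    ⟨kerFundamentalGroupToGroupEquiv hp ⟨x, rfl⟩⟩⟩

/-- There is a short exact sequence `1 → Bₙ(ℂ) → FBₙ(ℂ) → Sₙ → 1`:
a surjective homomorphism from the full braid group `FBₙ(ℂ) = π₁(Confₙ(ℂ)/Sₙ, q)` onto
the symmetric group `Sₙ` whose kernel is isomorphic to the pure braid group
`Bₙ(ℂ) = π₁(Confₙ(ℂ), x)`. -/
theorem fullBraid_surjects_onto_symmetricGroup (n : ℕ) (hn : 1 ≤ n) (x : ComplexConf n) :
    ∃ φ : FundamentalGroup (ComplexUConf n)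
        (Quotient.mk (MulAction.orbitRel (Equiv.Perm (Fin n)) (ComplexConf n)) x) →*
        Equiv.Perm (Fin n),
      Function.Surjective φ ∧
      Nonempty (φ.ker ≃* FundamentalGroup (ComplexConf n) x) := by
  have : PathConnectedSpace (OrderedConf (Fin n) ℂ) :=
    OrderedConf.pathConnectedSpace_of_one_lt_rank (by simp [Complex.rank_real_complex])
  exact fullBraid_surjects_onto_symmetricGroup_general (Y := ℂ) x
end
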